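/- For every lattice path ν, the right-flushing map R is an order isomorphism from the ν-Tamari lattice Tam(ν) onto the rotation poset of ν-trees; in particular, the ν-Tamari lattice is isomorphic to the rotation lattice of ν-trees. -/

import Mathlib

open scoped Classical

/-! Lattice paths: `true` = north step, `false` = east step. -/

def eastSteps (ν : List Bool) : ℕ := ν.count false
def northSteps (ν : List Bool) : ℕ := ν.count true

/-- Height at which the path first reaches abscissa `x`. -/
def heightAt : List Bool → ℕ → ℕ
  | _, 0 => 0
  | [], _ + 1 => 0
  | true :: rest, x + 1 => heightAt rest (x + 1) + 1
  | false :: rest, x + 1 => heightAt rest x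

/-- Lattice point of a path after `i` steps. -/
def pointAt (μ : List Bool) (i : ℕ) : ℕ × ℕ :=
  ((μ.take i).count false, (μ.take i).count true)

/-- The set `A_ν` of lattice points weakly above `ν`. -/
def APts (ν : List Bool) : Set (ℕ × ℕ) :=
  {p | p.1 ≤ eastSteps ν ∧ heightAt ν p.1 ≤ p.2 ∧ p.2 ≤ northSteps ν}

def Incompatible (ν : List Bool) (p q : ℕ × ℕ) : Prop :=
  (p.1 < q.1 ∧ p.2 < q.2 ∧ (q.1, p.2) ∈ APts ν) ∨
    (q.1 < p.1 ∧ q.2 < p.2 ∧ (p.1, q.2) ∈ APts ν)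

def Compatible (ν : List Bool) (p q : ℕ × ℕ) : Prop := ¬ Incompatible ν p q

def IsNuTree (ν : List Bool) (T : Set (ℕ × ℕ)) : Prop :=
  T ⊆ APts ν ∧ T.Pairwise (Compatible ν) ∧
    ∀ T', T' ⊆ APts ν → T'.Pairwise (Compatible ν) → T ⊆ T' → T' = T

def IsRightRotationAt (T T' : Set (ℕ × ℕ)) (q q' : ℕ × ℕ) : Prop :=
  ∃ x y x'' y', q = (x, y) ∧ q' = (x'', y') ∧ x < x'' ∧ y < y' ∧
    (x, y) ∈ T ∧ (x, y') ∈ T ∧ (x'', y) ∈ T ∧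
    (∀ b, y < b → b < y' → (x, b) ∉ T) ∧
    (∀ a, x < a → a < x'' → (a, y) ∉ T) ∧
    (∀ a, x < a → a < x'' → (a, y') ∉ T) ∧
    (∀ b, y < b → b < y' → (x'', b) ∉ T) ∧
    T' = (T \ {(x, y)}) ∪ {(x'', y')}

def IsRightRotation (T T' : Set (ℕ × ℕ)) : Prop :=
  ∃ q q', IsRightRotationAt T T' q q'

/-- Order relation of the rotation poset of ν-trees. -/
def TreeLE (ν : List Bool) : Set (ℕ × ℕ) → Set (ℕ × ℕ) → Prop :=
  Relation.ReflTransGen fun A B => IsNuTree ν A ∧ IsNuTree ν B ∧ IsRightRotation A B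

def IsNuPath (ν μ : List Bool) : Prop :=
  eastSteps μ = eastSteps ν ∧ northSteps μ = northSteps ν ∧
    ∀ i ≤ μ.length, pointAt μ i ∈ APts ν

noncomputable def horiz (ν : List Bool) (p : ℕ × ℕ) : ℕ :=
  sSup {k | (p.1 + k, p.2) ∈ APts ν}

/-- Covering relation of the ν-Tamari lattice. -/
def TamariCover (ν μ μ' : List Bool) : Prop :=
  IsNuPath ν μ ∧ IsNuPath ν μ' ∧
    ∃ i j, 0 < i ∧ i < j ∧ j ≤ μ.length ∧
      μ.getD (i - 1) true = false ∧ μ.getD i false = true ∧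
      horiz ν (pointAt μ j) = horiz ν (pointAt μ i) ∧
      (∀ k, i < k → k < j → horiz ν (pointAt μ k) ≠ horiz ν (pointAt μ i)) ∧
      μ' = μ.take (i - 1) ++ (μ.drop i).take (j - i) ++ [false] ++ μ.drop j

def TamariLE (ν : List Bool) : List Bool → List Bool → Prop :=
  Relation.ReflTransGen (TamariCover ν)

/-! Flushing maps -/

def rowAvail (ν : List Bool) (y : ℕ) : List ℕ :=
  ((List.range (eastSteps ν + 1)).filter fun x => decide (heightAt ν x ≤ y)).reverse

def pointsAtHeight (μ : List Bool) (y : ℕ) : ℕ :=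
  ((List.range (μ.length + 1)).filter fun i => decide ((μ.take i).count true = y)).length

def rflushAux (ν : List Bool) : List ℕ → ℕ → List ℕ → List (ℕ × ℕ)
  | [], _, _ => []
  | c :: rest, y, forbidden =>
    let placed := ((rowAvail ν y).filter fun x => decide (x ∉ forbidden)).take c
    placed.map (fun x => (x, y)) ++ rflushAux ν rest (y + 1) (forbidden ++ placed.dropLast)

/-- Right-flushing map `R`. -/
def Rflush (ν μ : List Bool) : Set (ℕ × ℕ) :=
  {p | p ∈ rflushAux ν ((List.range (northSteps ν + 1)).map (pointsAtHeight μ)) 0 []}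

def lflushAux (m : ℕ) : List ℕ → ℕ → List ℕ → List (ℕ × ℕ)
  | [], _, _ => []
  | c :: rest, y, forbidden =>
    let placed := ((List.range (m + 1)).filter fun x => decide (x ∉ forbidden)).take c
    placed.map (fun x => (x, y)) ++ lflushAux m rest (y + 1) (forbidden ++ placed.dropLast)

noncomputable def rowCount (T : Set (ℕ × ℕ)) (y : ℕ) : ℕ := {x | (x, y) ∈ T}.ncard

/-- Left-flushing map `L`. -/
noncomputable def Lflush (ν : List Bool) (T : Set (ℕ × ℕ)) : Set (ℕ × ℕ) :=
  {p | p ∈ lflushAux (eastSteps ν) ((List.range (northSteps ν + 1)).map (rowCount T)) 0 []}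

def pathPointSet (μ : List Bool) : Set (ℕ × ℕ) := {p | ∃ i ≤ μ.length, pointAt μ i = p}

/-! Bracket vectors (0-indexed positions `0,…,ℓ`). -/

noncomputable def fpos (ν : List Bool) (k : ℕ) : ℕ :=
  sSup {i | i ≤ ν.length ∧ (ν.take i).count true = k}

def bmin (ν : List Bool) : List ℕ :=
  (List.range (ν.length + 1)).map fun i => (ν.take i).count true

def IsBracketVector (ν : List Bool) (b : List ℕ) : Prop :=
  b.length = ν.length + 1 ∧
    (∀ k ≤ northSteps ν, b.getD (fpos ν k) 0 = k) ∧
    (∀ i < b.length, (bmin ν).getD i 0 ≤ b.getD i 0 ∧ b.getD i 0 ≤ northSteps ν) ∧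
    ∀ i j k, i < j → j < k → k < b.length →
      ¬(b.getD i 0 = b.getD k 0 ∧ b.getD i 0 < b.getD j 0)

noncomputable def leftChild (T : Set (ℕ × ℕ)) (p : ℕ × ℕ) : Option (ℕ × ℕ) :=
  if ∃ b, (p.1, b) ∈ T ∧ b < p.2 then some (p.1, sSup {b | (p.1, b) ∈ T ∧ b < p.2})
  else none

noncomputable def rightChild (T : Set (ℕ × ℕ)) (p : ℕ × ℕ) : Option (ℕ × ℕ) :=
  if ∃ a, (a, p.2) ∈ T ∧ p.1 < a then
    if ∃ b, (sInf {a | (a, p.2) ∈ T ∧ p.1 < a}, b) ∈ T ∧ p.2 < b then none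
    else some (sInf {a | (a, p.2) ∈ T ∧ p.1 < a}, p.2)
  else none

noncomputable def inorderAux (T : Set (ℕ × ℕ)) : ℕ → ℕ × ℕ → List (ℕ × ℕ)
  | 0, _ => []
  | fuel + 1, p =>
    (match leftChild T p with
      | none => []
      | some l => inorderAux T fuel l) ++ p ::
      (match rightChild T p with
        | none => []
        | some r => inorderAux T fuel r)

/-- Bracket vector of a ν-tree: y-coordinates read in in-order from the root `(0,n)`. -/
noncomputable def bracketOfTree (ν : List Bool) (T : Set (ℕ × ℕ)) : List ℕ :=
  (inorderAux T T.ncard (0, northSteps ν)).map Prod.snd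

noncomputable def bracketAssign (ν μ : List Bool) : List (ℕ × ℕ) :=
  ((List.range (northSteps ν + 1)).foldl
    (fun (st : List (ℕ × ℕ) × List ℕ) k =>
      let picked := ((st.2.filter fun i => decide (i ≤ fpos ν k)).reverse).take
        (pointsAtHeight μ k)
      (st.1 ++ picked.map fun i => (i, k), st.2.filter fun i => decide (i ∉ picked)))
    ([], List.range (ν.length + 1))).1

/-- Bracket vector of a ν-path. -/
noncomputable def bracketOfPath (ν μ : List Bool) : List ℕ :=
  (List.range (ν.length + 1)).map fun i => ((bracketAssign ν μ).lookup i).getD 0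

/-- Componentwise order on (equal length) integer vectors. -/
def listLE (b b' : List ℕ) : Prop :=
  b.length = b'.length ∧ ∀ i, b.getD i 0 ≤ b'.getD i 0

/-! Reversal -/

def revPath (ν : List Bool) : List Bool := ν.reverse.map fun s => !s

def revTree (ν : List Bool) (T : Set (ℕ × ℕ)) : Set (ℕ × ℕ) :=
  (fun p : ℕ × ℕ => (northSteps ν - p.2, eastSteps ν - p.1)) '' T

/-! Pipe dreams and subword complexes -/

def dOf (ν : List Bool) (p : ℕ × ℕ) : ℕ := p.1 + (northSteps ν - p.2)

def labelPerm (ν : List Bool) (p : ℕ × ℕ) : Equiv.Perm ℕ :=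
  Equiv.swap (dOf ν p + 1) (dOf ν p + 2)

/-- The points of `A_ν` in reading order: rows from bottom to top, each left to right. -/
def readingList (ν : List Bool) : List (ℕ × ℕ) :=
  ((List.range (northSteps ν + 1)).map fun y =>
    ((List.range (eastSteps ν + 1)).filter fun x => decide (heightAt ν x ≤ y)).map
      fun x => (x, y)).flatten

/-- The minimal ν-tree. -/
def TminSet (ν : List Bool) : Set (ℕ × ℕ) :=
  {p | p ∈ APts ν ∧ (p.1 = 0 ∨ ∃ i < ν.length, ν.getD i true = false ∧ p = pointAt ν (i + 1))}

noncomputable def prodOver (ν : List Bool) (C : Set (ℕ × ℕ)) : Equiv.Perm ℕ :=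
  (((readingList ν).filter fun p => decide (p ∈ C)).map (labelPerm ν)).prod

/-- Coxeter length: number of inversions. -/
noncomputable def lenInv (π : Equiv.Perm ℕ) : ℕ :=
  {q : ℕ × ℕ | q.1 < q.2 ∧ π q.2 < π q.1}.ncard

noncomputable def piNu (ν : List Bool) : Equiv.Perm ℕ := prodOver ν (APts ν \ TminSet ν)

def Qword (ν : List Bool) : List (Equiv.Perm ℕ) := (readingList ν).map (labelPerm ν)

noncomputable def prodAt (Q : List (Equiv.Perm ℕ)) (P : Finset ℕ) : Equiv.Perm ℕ :=
  (((List.range Q.length).filter fun i => decide (i ∈ P)).map fun i => Q.getD i 1).prod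

def IsFacet (Q : List (Equiv.Perm ℕ)) (π : Equiv.Perm ℕ) (I : Finset ℕ) : Prop :=
  I ⊆ Finset.range Q.length ∧
    prodAt Q (Finset.range Q.length \ I) = π ∧
    (Finset.range Q.length \ I).card = lenInv π

def IncFlip (Q : List (Equiv.Perm ℕ)) (π : Equiv.Perm ℕ) (I J : Finset ℕ) : Prop :=
  IsFacet Q π I ∧ IsFacet Q π J ∧ ∃ i ∈ I, ∃ j ∈ J, i < j ∧ I.erase i = J.erase j

def FlipLE (Q : List (Equiv.Perm ℕ)) (π : Equiv.Perm ℕ) : Finset ℕ → Finset ℕ → Prop :=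
  Relation.ReflTransGen (IncFlip Q π)

/-- The maximal ν-tree. -/
def TmaxSet (ν : List Bool) : Set (ℕ × ℕ) :=
  {p | (p.1 ≤ eastSteps ν ∧ p.2 = northSteps ν) ∨ ∃ i < ν.length, ν.getD i false = true ∧ p = pointAt ν i}


/-! Abstract flushed sets -/

/-- Abscissa `x` is forbidden at row `y`. -/
def Forb (T : Set (ℕ × ℕ)) (y x : ℕ) : Prop := ∃ j < y, (x, j) ∈ T ∧ ∃ t < x, (t, j) ∈ T

structure Fl (w : ℕ → ℕ) (n : ℕ) (T : Set (ℕ × ℕ)) : Prop where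
  sub : ∀ x y, (x, y) ∈ T → y ≤ n ∧ x ≤ w y
  ne : ∀ y ≤ n, ∃ x, (x, y) ∈ T
  nf : ∀ x y, (x, y) ∈ T → ¬ Forb T y x
  up : ∀ x y t, (t, y) ∈ T → t < x → x ≤ w y → ¬ Forb T y x → (x, y) ∈ T

def Last (w : ℕ → ℕ) (n : ℕ) (T : Set (ℕ × ℕ)) : Prop :=
  ∀ x ≤ w n, ¬ Forb T n x → (x, n) ∈ T

noncomputable def nonmin (m : ℕ) (T : Set (ℕ × ℕ)) (j : ℕ) : Finset ℕ :=
  (Finset.range (m + 1)).filter fun x => (x, j) ∈ T ∧ ∃ t < x, (t, j) ∈ T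

noncomputable def eT (m : ℕ) (T : Set (ℕ × ℕ)) (j : ℕ) : ℕ := (nonmin m T j).card

noncomputable def FF (m : ℕ) (T : Set (ℕ × ℕ)) (y : ℕ) : Finset ℕ :=
  (Finset.range (m + 1)).filter fun x => Forb T y x

theorem Forb.mono {T : Set (ℕ × ℕ)} {y y' x : ℕ} (h : Forb T y x) (hy : y ≤ y') :
    Forb T y' x := by
  obtain ⟨j, hj, h⟩ := h
  exact ⟨j, by omega, h⟩

theorem forb_succ {T : Set (ℕ × ℕ)} {y x : ℕ} :
    Forb T (y + 1) x ↔ Forb T y x ∨ ((x, y) ∈ T ∧ ∃ t < x, (t, y) ∈ T) := by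
  constructor
  · rintro ⟨j, hj, h⟩
    rcases Nat.lt_succ_iff_lt_or_eq.mp hj with hj | rfl
    · exact Or.inl ⟨j, hj, h⟩
    · exact Or.inr h
  · rintro (h | h)
    · exact h.mono (by omega)
    · exact ⟨y, by omega, h⟩

theorem not_forb_zero {T : Set (ℕ × ℕ)} {y : ℕ} : ¬ Forb T y 0 := by
  rintro ⟨j, hj, h, t, ht, _⟩
  omega

section
variable {w : ℕ → ℕ} {n : ℕ} {T : Set (ℕ × ℕ)}

theorem Fl.exists_min (h : Fl w n T) {y : ℕ} (hy : y ≤ n) :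
    ∃ x, (x, y) ∈ T ∧ ∀ t, (t, y) ∈ T → x ≤ t := by
  have hne := h.ne y hy
  refine ⟨Nat.find hne, Nat.find_spec hne, fun t ht => Nat.find_min' hne ht⟩

theorem Fl.card_FF (h : Fl w n T) (m : ℕ) (y : ℕ) :
    (FF m T y).card = ∑ j ∈ Finset.range y, eT m T j := by
  induction y with
  | zero => simp [FF, Forb]
  | succ y ih =>
    rw [Finset.sum_range_succ, ← ih, eT, ← Finset.card_union_of_disjoint]
    · congr 1
      ext a
      simp only [FF, nonmin, Finset.mem_union, Finset.mem_filter, forb_succ]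
      tauto
    · rw [Finset.disjoint_left]
      intro a ha hb
      simp only [FF, nonmin, Finset.mem_filter] at ha hb
      exact h.nf _ _ hb.2.1 ha.2

theorem Fl.forb_le (h : Fl w n T) (hw : Monotone w) {y x : ℕ} (hf : Forb T (y + 1) x) :
    0 < x ∧ x ≤ w y := by
  obtain ⟨j, hj, hx, t, ht, _⟩ := hf
  have := (h.sub _ _ hx).2
  have := hw (show j ≤ y by omega)
  omega

theorem Fl.sum_le (h : Fl w n T) (hw : Monotone w) (m : ℕ) {y : ℕ} :
    ∑ j ∈ Finset.range (y + 1), eT m T j ≤ w y := by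
  rw [← h.card_FF]
  have : FF m T (y + 1) ⊆ Finset.Ioc 0 (w y) := by
    intro a ha
    simp only [FF, Finset.mem_filter] at ha
    simpa using h.forb_le hw ha.2
  simpa using Finset.card_le_card this

theorem Fl.sum_eq (h : Fl w n T) (hw : Monotone w) (hl : Last w n T) :
    ∑ j ∈ Finset.range (n + 1), eT (w n) T j = w n := by
  rw [← h.card_FF]
  have : FF (w n) T (n + 1) = Finset.Ioc 0 (w n) := by
    ext a
    simp only [FF, Finset.mem_filter, Finset.mem_Ioc, Finset.mem_range]
    constructor
    · intro ha
      exact h.forb_le hw ha.2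
    · intro ha
      refine ⟨by omega, ?_⟩
      rw [forb_succ]
      by_cases hf : Forb T n a
      · exact Or.inl hf
      · exact Or.inr ⟨hl _ ha.2 hf, 0, ha.1, hl _ (by omega) not_forb_zero⟩
  simp [this]

theorem Fl.last (h : Fl w n T) (hw : Monotone w)
    (hs : ∑ j ∈ Finset.range (n + 1), eT (w n) T j = w n) : Last w n T := by
  rw [← h.card_FF] at hs
  have key : ∀ a, 0 < a → a ≤ w n → Forb T (n + 1) a := by
    have h1 : FF (w n) T (n + 1) ⊆ Finset.Ioc 0 (w n) := by
      intro a ha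
      simp only [FF, Finset.mem_filter] at ha
      simpa using h.forb_le hw ha.2
    have := Finset.eq_of_subset_of_card_le h1 (by simp [hs])
    intro a h0 ha
    have : a ∈ FF (w n) T (n + 1) := by rw [this]; simp; omega
    simp only [FF, Finset.mem_filter] at this
    exact this.2
  intro x hx hf
  by_cases h0 : x = 0
  · subst h0
    obtain ⟨t, ht, hmin⟩ := h.exists_min le_rfl
    by_cases ht0 : t = 0
    · rwa [ht0] at ht
    · exfalso
      rcases forb_succ.mp (key t (by omega) (h.sub _ _ ht).2) with h1 | ⟨_, s, hs, hs'⟩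
      · exact h.nf _ _ ht h1
      · have := hmin s hs'
        omega
  · rcases forb_succ.mp (key x (by omega) hx) with h1 | h1
    · exact absurd h1 hf
    · exact h1.1

theorem Fl.nonmin_eq (h : Fl w n T) (hw : Monotone w) {y x : ℕ}
    (hx : (x, y) ∈ T) (hmin : ∀ t, (t, y) ∈ T → x ≤ t) :
    insert x (nonmin (w n) T y) = (Finset.range (w n + 1)).filter fun x => (x, y) ∈ T := by
  ext a
  simp only [nonmin, Finset.mem_insert, Finset.mem_filter, Finset.mem_range]
  constructor
  · rintro (rfl | ha)
    · have := h.sub _ _ hx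
      have := hw this.1
      exact ⟨by omega, hx⟩
    · exact ⟨ha.1, ha.2.1⟩
  · rintro ⟨h1, h2⟩
    by_cases hax : a = x
    · exact Or.inl hax
    · have := hmin a h2
      exact Or.inr ⟨h1, h2, x, by omega, hx⟩

theorem Fl.card_row (h : Fl w n T) (hw : Monotone w) {y : ℕ} (hy : y ≤ n) :
    ((Finset.range (w n + 1)).filter fun x => (x, y) ∈ T).card = eT (w n) T y + 1 := by
  obtain ⟨x, hx, hmin⟩ := h.exists_min hy
  rw [← h.nonmin_eq hw hx hmin, eT, Finset.card_insert_of_notMem]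
  simp only [nonmin, Finset.mem_filter, not_and, not_exists]
  intro _ _ t ht h'
  have := hmin t h'
  omega

theorem Fl.row_subset {T' : Set (ℕ × ℕ)} (h : Fl w n T) (h' : Fl w n T') (hw : Monotone w)
    {y : ℕ} (hy : y ≤ n) (he : eT (w n) T y = eT (w n) T' y)
    (hf : ∀ x, Forb T y x ↔ Forb T' y x) {x : ℕ} (hx : (x, y) ∈ T) : (x, y) ∈ T' := by
  by_contra hc
  have hT := h.card_row hw hy
  have hT' := h'.card_row hw hy
  have hxw := (h.sub _ _ hx).2
  have hwn := hw hy
  have : ((Finset.range (w n + 1)).filter fun x => (x, y) ∈ T') ⊂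
      ((Finset.range (w n + 1)).filter fun x => (x, y) ∈ T) := by
    rw [Finset.ssubset_iff_of_subset]
    · exact ⟨x, by simp [hx]; omega, by simp [hc]⟩
    · intro t ht
      simp only [Finset.mem_filter, Finset.mem_range] at ht ⊢
      refine ⟨ht.1, ?_⟩
      have ht2 := ht.2
      rcases lt_trichotomy t x with htx | rfl | htx
      · exact absurd (h'.up _ _ _ ht.2 htx hxw (by rw [← hf]; exact h.nf _ _ hx)) hc
      · exact hx
      · exact h.up _ _ _ hx htx (h'.sub _ _ ht.2).2 (by rw [hf]; exact h'.nf _ _ ht.2)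
  have := Finset.card_lt_card this
  omega

theorem Fl.unique {T' : Set (ℕ × ℕ)} (h : Fl w n T) (h' : Fl w n T') (hw : Monotone w)
    (he : ∀ y ≤ n, eT (w n) T y = eT (w n) T' y) : T = T' := by
  have key : ∀ y, y ≤ n → ∀ x, (x, y) ∈ T ↔ (x, y) ∈ T' := by
    intro y
    induction y using Nat.strong_induction_on with
    | _ y ih =>
      intro hy x
      have hf : ∀ x, Forb T y x ↔ Forb T' y x := by
        intro x
        constructor
        · rintro ⟨j, hj, h1, t, ht, h2⟩
          exact ⟨j, hj, (ih j hj (by omega) x).1 h1, t, ht, (ih j hj (by omega) t).1 h2⟩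
        · rintro ⟨j, hj, h1, t, ht, h2⟩
          exact ⟨j, hj, (ih j hj (by omega) x).2 h1, t, ht, (ih j hj (by omega) t).2 h2⟩
      exact ⟨h.row_subset h' hw hy (he y hy) hf,
        h'.row_subset h hw hy (he y hy).symm fun x => (hf x).symm⟩
  ext ⟨x, y⟩
  constructor
  · intro hx
    exact (key y (h.sub _ _ hx).1 x).1 hx
  · intro hx
    exact (key y (h'.sub _ _ hx).1 x).2 hx

noncomputable def GG (T : Set (ℕ × ℕ)) (x k : ℕ) : Finset ℕ :=
  (Finset.range x).filter fun a => ¬ Forb T k a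

theorem Fl.defect (h : Fl w n T) (hw : Monotone w) {y x : ℕ}
    (hx : (x, y) ∈ T) (hmin : ∀ t, (t, y) ∈ T → x ≤ t) :
    w y = ∑ j ∈ Finset.range (y + 1), eT (w n) T j + (GG T x y).card := by
  rw [← h.card_FF]
  have hxs := h.sub _ _ hx
  have hwn := hw hxs.1
  have hnx : ¬ Forb T (y + 1) x := by
    rw [forb_succ]
    rintro (h1 | ⟨_, t, ht, h1⟩)
    · exact h.nf _ _ hx h1
    · have := hmin t h1
      omega
  have hd : Disjoint (FF (w n) T (y + 1)) (GG T x y) := by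
    rw [Finset.disjoint_left]
    intro a ha hb
    simp only [FF, GG, Finset.mem_filter, Finset.mem_range] at ha hb
    rcases forb_succ.mp ha.2 with h1 | h1
    · exact hb.2 h1
    · have := hmin a h1.1
      omega
  have heq : Finset.range (w y + 1) = insert x (FF (w n) T (y + 1) ∪ GG T x y) := by
    ext a
    simp only [FF, GG, Finset.mem_insert, Finset.mem_union, Finset.mem_filter, Finset.mem_range]
    constructor
    · intro ha
      rcases lt_trichotomy a x with hax | rfl | hax
      · by_cases hf : Forb T y a
        · exact Or.inr (Or.inl ⟨by omega, hf.mono (by omega)⟩)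
        · exact Or.inr (Or.inr ⟨hax, hf⟩)
      · exact Or.inl rfl
      · refine Or.inr (Or.inl ⟨by omega, ?_⟩)
        rw [forb_succ]
        by_cases hf : Forb T y a
        · exact Or.inl hf
        · exact Or.inr ⟨h.up _ _ _ hx hax (by omega) hf, x, hax, hx⟩
    · rintro (rfl | ⟨_, hf⟩ | ⟨h1, _⟩)
      · omega
      · have := h.forb_le hw hf
        omega
      · omega
  have hc := congrArg Finset.card heq
  rw [Finset.card_insert_of_notMem, Finset.card_union_of_disjoint hd, Finset.card_range] at hc
  · omega
  · simp only [FF, GG, Finset.mem_union, Finset.mem_filter, Finset.mem_range]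
    rintro (h1 | h1)
    · exact hnx h1.2
    · omega

/-- `x` minimal in row `y` and present in a later row `j`: the defect does not increase. -/
theorem Fl.defect_le (h : Fl w n T) (hw : Monotone w) {y x j : ℕ}
    (hx : (x, y) ∈ T) (hmin : ∀ t, (t, y) ∈ T → x ≤ t) (hj : y < j) (hxj : (x, j) ∈ T) :
    w j + ∑ i ∈ Finset.range (y + 1), eT (w n) T i ≤
      w y + ∑ i ∈ Finset.range (j + 1), eT (w n) T i := by
  obtain ⟨z, hz, hzmin⟩ := h.exists_min (h.sub _ _ hxj).1
  have h1 := h.defect hw hx hmin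
  have h2 := h.defect hw hz hzmin
  have : GG T z j ⊆ GG T x y := by
    intro a ha
    simp only [GG, Finset.mem_filter, Finset.mem_range] at ha ⊢
    have := hzmin x hxj
    exact ⟨by omega, fun hf => ha.2 (hf.mono (by omega))⟩
  have := Finset.card_le_card this
  omega

theorem Fl.not_forb_of_min (h : Fl w n T) {y x j : ℕ}
    (hx : (x, y) ∈ T) (hmin : ∀ t, (t, y) ∈ T → x ≤ t) 
    (hno : ∀ i, y < i → i < j → (x, i) ∉ T) : ¬ Forb T j x := by
  rintro ⟨i, hi, h1, t, ht, h2⟩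
  rcases lt_trichotomy i y with hiy | rfl | hiy
  · exact h.nf _ _ hx ⟨i, hiy, h1, t, ht, h2⟩
  · have := hmin t h2
    omega
  · exact hno i hiy hi h1

theorem Fl.min_gt (h : Fl w n T) (hw : Monotone w) {y x j : ℕ}
    (hx : (x, y) ∈ T) (hmin : ∀ t, (t, y) ∈ T → x ≤ t) (hj : y < j)
    (hno : ∀ i, y < i → i ≤ j → (x, i) ∉ T) {t : ℕ} (ht : (t, j) ∈ T) : x < t := by
  by_contra hc
  rcases Nat.lt_or_ge t x with h1 | h1
  · refine hno j hj le_rfl (h.up _ _ _ ht h1 ?_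
      (h.not_forb_of_min hx hmin fun i h1 h2 => hno i h1 (by omega)))
    have := (h.sub _ _ hx).2
    have := hw hj.le
    omega
  · have : t = x := by omega
    subst this
    exact hno j hj le_rfl ht

theorem Fl.defect_gt (h : Fl w n T) (hw : Monotone w) {y x j : ℕ}
    (hx : (x, y) ∈ T) (hmin : ∀ t, (t, y) ∈ T → x ≤ t) (hj : y < j) (hjn : j ≤ n)
    (hno : ∀ i, y < i → i ≤ j → (x, i) ∉ T) :
    w y + ∑ i ∈ Finset.range (j + 1), eT (w n) T i <
      w j + ∑ i ∈ Finset.range (y + 1), eT (w n) T i := by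
  obtain ⟨z, hz, hzmin⟩ := h.exists_min hjn
  have h1 := h.defect hw hx hmin
  have h2 := h.defect hw hz hzmin
  have hzx := h.min_gt hw hx hmin hj hno hz
  have : GG T x y ⊂ GG T z j := by
    rw [Finset.ssubset_iff_of_subset]
    · refine ⟨x, ?_, by simp [GG]⟩
      simp only [GG, Finset.mem_filter, Finset.mem_range]
      exact ⟨hzx, h.not_forb_of_min hx hmin fun i h1 h2 => hno i h1 (by omega)⟩
    · intro a ha
      simp only [GG, Finset.mem_filter, Finset.mem_range] at ha ⊢
      refine ⟨by omega, ?_⟩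
      rintro ⟨i, hi, h3, t, ht, h4⟩
      rcases lt_trichotomy i y with hiy | rfl | hiy
      · exact ha.2 ⟨i, hiy, h3, t, ht, h4⟩
      · have := hmin a h3
        omega
      · have := h.min_gt hw hx hmin hiy (fun k h1 h2 => hno k h1 (by omega)) h3
        omega
  have := Finset.card_lt_card this
  omega

theorem Fl.exists_above (h : Fl w n T) (hw : Monotone w) (hl : Last w n T) {y x : ℕ}
    (hx : (x, y) ∈ T) (hmin : ∀ t, (t, y) ∈ T → x ≤ t) (hy : y < n) :
    ∃ j, y < j ∧ (x, j) ∈ T := by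
  by_contra hc
  push Not at hc
  refine hc n hy (hl x ?_ (h.not_forb_of_min hx hmin fun i h1 h2 => hc i h1))
  have := (h.sub _ _ hx).2
  have := hw hy.le
  omega

end

/-- Cover relation at the level of numbers of east steps per row. -/
def CCat (w : ℕ → ℕ) (n : ℕ) (e e' : ℕ → ℕ) (y y' : ℕ) : Prop :=
  y < y' ∧ y' ≤ n ∧
    (∀ k, y < k → k < y' → w y + ∑ i ∈ Finset.range (k + 1), e i <
      w k + ∑ i ∈ Finset.range (y + 1), e i) ∧
    (w y' + ∑ i ∈ Finset.range (y + 1), e i ≤ w y + ∑ i ∈ Finset.range (y' + 1), e i) ∧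
    e' y + 1 = e y ∧ e' y' = e y' + 1 ∧ ∀ j ≤ n, j ≠ y → j ≠ y' → e' j = e j

def CC (w : ℕ → ℕ) (n : ℕ) (e e' : ℕ → ℕ) : Prop := ∃ y y', CCat w n e e' y y'

theorem CC.congr {w : ℕ → ℕ} {n : ℕ} {e e' f f' : ℕ → ℕ} (h : CC w n e e')
    (he : ∀ j ≤ n, e j = f j) (he' : ∀ j ≤ n, e' j = f' j) : CC w n f f' := by
  obtain ⟨y, y', h1, h2, h3, h4, h5, h6, h7⟩ := h
  have hs : ∀ k ≤ n, ∑ i ∈ Finset.range (k + 1), e i = ∑ i ∈ Finset.range (k + 1), f i := by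
    intro k hk
    refine Finset.sum_congr rfl fun i hi => he i ?_
    simp at hi
    omega
  refine ⟨y, y', h1, h2, ?_, ?_, ?_, ?_, ?_⟩
  · intro k hk hk'
    rw [← hs k (by omega), ← hs y (by omega)]
    exact h3 k hk hk'
  · rw [← hs y' (by omega), ← hs y (by omega)]
    exact h4
  · rw [← he y (by omega), ← he' y (by omega)]
    exact h5
  · rw [← he y' (by omega), ← he' y' (by omega)]
    exact h6
  · intro j hj h1 h2
    rw [← he j hj, ← he' j hj]
    exact h7 j hj h1 h2

section
variable {w : ℕ → ℕ} {n : ℕ} {T T' : Set (ℕ × ℕ)}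

theorem rot_forb {x y x2 y2 : ℕ} (h : Fl w n T) (hx : x < x2) (hy : y < y2) (h1 : (x, y) ∈ T)
    (h2 : (x, y2) ∈ T) (h3 : (x2, y) ∈ T) (hmin : ∀ t, (t, y) ∈ T → x ≤ t)
    (h5 : ∀ a, x < a → a < x2 → (a, y) ∉ T)
    (hT' : T' = (T \ {(x, y)}) ∪ {(x2, y2)}) :
    (∀ k a, Forb T' k a → Forb T k a) ∧
    (∀ k a, Forb T k a → Forb T' k a ∨ (y < k ∧ k ≤ y2 ∧ a = x2)) ∧
    (¬ Forb T' y2 x2) ∧ (x2, y2) ∉ T := by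
  have mem : ∀ a b, (a, b) ∈ T' ↔ ((a, b) ∈ T ∧ ¬ (a = x ∧ b = y)) ∨ (a = x2 ∧ b = y2) := by
    intro a b
    rw [hT']
    simp [or_comm]
  have hn : ∀ k, y < k → (x2, k) ∉ T := fun k hk hm => h.nf _ _ hm ⟨y, hk, h3, x, hx, h1⟩
  refine ⟨?_, ?_, ?_, hn y2 hy⟩
  · rintro k a ⟨j, hj, ha, t, ht, hta⟩
    rw [mem] at ha hta
    rcases ha with ⟨ha, _⟩ | ⟨rfl, rfl⟩
    · rcases hta with ⟨hta, _⟩ | ⟨rfl, rfl⟩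
      · exact ⟨j, hj, ha, t, ht, hta⟩
      · exact ⟨j, hj, ha, x, by omega, h2⟩
    · exact ⟨y, by omega, h3, x, hx, h1⟩
  · rintro k a ⟨j, hj, ha, t, ht, hta⟩
    by_cases hax : a = x2
    · subst hax
      have hjy : j ≤ y := by
        by_contra hc
        exact hn j (by omega) ha
      by_cases hjy' : j = y
      · subst hjy'
        by_cases hk : k ≤ y2
        · exact Or.inr ⟨hj, hk, rfl⟩
        · refine Or.inl ⟨y2, by omega, ?_, x, hx, ?_⟩
          · rw [mem]; exact Or.inr ⟨rfl, rfl⟩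
          · rw [mem]; exact Or.inl ⟨h2, by omega⟩
      · refine Or.inl ⟨j, hj, ?_, t, ht, ?_⟩
        · rw [mem]; exact Or.inl ⟨ha, by omega⟩
        · rw [mem]; exact Or.inl ⟨hta, by omega⟩
    · left
      by_cases hjy : j = y
      · subst hjy
        have h6 := hmin t hta
        have h7 : x2 < a := by
          by_contra hc
          exact h5 a (by omega) (by omega) ha
        refine ⟨j, hj, ?_, x2, h7, ?_⟩
        · rw [mem]; exact Or.inl ⟨ha, by omega⟩
        · rw [mem]; exact Or.inl ⟨h3, by omega⟩
      · refine ⟨j, hj, ?_, t, ht, ?_⟩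
        · rw [mem]; exact Or.inl ⟨ha, by omega⟩
        · rw [mem]; exact Or.inl ⟨hta, by omega⟩
  · rintro ⟨j, hj, ha, t, ht, hta⟩
    rw [mem] at ha hta
    rcases ha with ⟨ha, _⟩ | ⟨_, rfl⟩
    · rcases hta with ⟨hta, hne⟩ | ⟨rfl, rfl⟩
      · rcases lt_trichotomy j y with hjy | rfl | hjy
        · exact h.nf _ _ h3 ⟨j, hjy, ha, t, ht, hta⟩
        · have := hmin t hta
          exact h5 t (by omega) ht hta
        · exact hn j hjy ha
      · omega
    · omega

theorem rot_min {x y y2 : ℕ} (h : Fl w n T) (hy : y < y2) (h1 : (x, y) ∈ T)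
    (h2 : (x, y2) ∈ T) : ∀ t, (t, y) ∈ T → x ≤ t := by
  intro t ht
  by_contra hc
  exact h.nf _ _ h2 ⟨y, hy, h1, t, by omega, ht⟩

theorem Fl.rot (h : Fl w n T) (hw : Monotone w) (hl : Last w n T) {q q' : ℕ × ℕ}
    (hr : IsRightRotationAt T T' q q') :
    Fl w n T' ∧ Last w n T' ∧ CCat w n (eT (w n) T) (eT (w n) T') q.2 q'.2 := by
  obtain ⟨x, y, x2, y2, rfl, rfl, hx, hy, h1, h2, h3, h4, h5, -, -, hT'⟩ := hr
  have hmin := rot_min h hy h1 h2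
  obtain ⟨f1, f2, f3, hn⟩ := rot_forb h hx hy h1 h2 h3 hmin h5 hT'
  have mem : ∀ a b, (a, b) ∈ T' ↔ ((a, b) ∈ T ∧ ¬ (a = x ∧ b = y)) ∨ (a = x2 ∧ b = y2) := by
    intro a b
    rw [hT']
    simp [or_comm]
  have hwy := hw hy.le
  have hy2n := (h.sub _ _ h2).1
  have hx2w := (h.sub _ _ h3).2
  have hwn := hw hy2n
  refine ⟨⟨?_, ?_, ?_, ?_⟩, ?_, ?_⟩
  · intro a b hab
    rw [mem] at hab
    rcases hab with ⟨hab, _⟩ | ⟨rfl, rfl⟩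
    · exact h.sub _ _ hab
    · exact ⟨hy2n, by omega⟩
  · intro b hb
    by_cases hby : b = y
    · exact ⟨x2, by rw [mem, hby]; exact Or.inl ⟨h3, by omega⟩⟩
    · obtain ⟨a, ha⟩ := h.ne b hb
      exact ⟨a, by rw [mem]; exact Or.inl ⟨ha, by omega⟩⟩
  · intro a b hab hf
    rw [mem] at hab
    rcases hab with ⟨hab, _⟩ | ⟨rfl, rfl⟩
    · exact h.nf _ _ hab (f1 _ _ hf)
    · exact f3 hf
  · intro a b t htb hta haw hf
    rw [mem] at htb ⊢
    by_cases ha2 : a = x2 ∧ b = y2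
    · exact Or.inr ha2
    left
    by_cases hf' : Forb T b a
    · exfalso
      rcases f2 _ _ hf' with h6 | ⟨h6, h7, rfl⟩
      · exact hf h6
      · have hb : b < y2 := by omega
        rcases htb with ⟨htb, _⟩ | ⟨rfl, rfl⟩
        · have h8 : x < t := h.min_gt hw h1 hmin h6 (fun i hi hi' => h4 i hi (by omega)) htb
          have h9 : (t, y) ∈ T := h.up _ _ _ h1 h8 (by omega)
            (fun hf => h.nf _ _ htb (hf.mono (by omega)))
          exact h.nf _ _ htb ⟨y, h6, h9, x, h8, h1⟩
        · omega
    · rcases htb with ⟨htb, _⟩ | ⟨rfl, rfl⟩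
      · refine ⟨h.up _ _ _ htb hta haw hf', ?_⟩
        rintro ⟨rfl, rfl⟩
        have := hmin t htb
        omega
      · refine ⟨h.up _ _ _ h2 (by omega) haw hf', by omega⟩
  · intro a ha hf
    rw [mem]
    by_cases ha2 : a = x2 ∧ n = y2
    · exact Or.inr ha2
    · left
      refine ⟨hl a ha fun hf' => ?_, by omega⟩
      rcases f2 _ _ hf' with h6 | ⟨h6, h7, rfl⟩
      · exact hf h6
      · omega
  · refine ⟨hy, hy2n, ?_, h.defect_le hw h1 hmin hy h2, ?_, ?_, ?_⟩
    · intro k hk hk'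
      exact h.defect_gt hw h1 hmin hk (by omega) fun i hi hi' => h4 i hi (by omega)
    · have : nonmin (w n) T y = insert x2 (nonmin (w n) T' y) := by
        ext a
        simp only [nonmin, Finset.mem_insert, Finset.mem_filter, Finset.mem_range, mem]
        constructor
        · rintro ⟨ha, ha', t, ht, htT⟩
          by_cases hax : a = x2
          · exact Or.inl hax
          · right
            have := hmin t htT
            have h7 : x2 < a := by
              by_contra hc
              exact h5 a (by omega) (by omega) ha'
            exact ⟨ha, Or.inl ⟨ha', by omega⟩, x2, h7, Or.inl ⟨h3, by omega⟩⟩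
        · rintro (rfl | ⟨ha, ⟨ha', _⟩ | h6, t, ht, htT⟩)
          · exact ⟨by omega, h3, x, hx, h1⟩
          · rcases htT with htT | htT
            · exact ⟨ha, ha', t, ht, htT.1⟩
            · omega
          · omega
      rw [eT, eT, this, Finset.card_insert_of_notMem]
      simp only [nonmin, Finset.mem_filter, Finset.mem_range, mem]
      rintro ⟨_, _, t, ht, ⟨htT, htn⟩ | h6⟩
      · have := hmin t htT
        have : t ≠ x := by
          rintro rfl
          simp at htn
        exact h5 t (by omega) ht htT
      · omega
    · have : nonmin (w n) T' y2 = insert x2 (nonmin (w n) T y2) := by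
        ext a
        simp only [nonmin, Finset.mem_insert, Finset.mem_filter, Finset.mem_range, mem]
        constructor
        · rintro ⟨ha, ha', t, ht, htT⟩
          by_cases hax : a = x2
          · exact Or.inl hax
          · right
            rcases ha' with ha' | ha'
            · rcases htT with htT | htT
              · exact ⟨ha, ha'.1, t, ht, htT.1⟩
              · exact ⟨ha, ha'.1, x, by omega, h2⟩
            · omega
        · rintro (rfl | ⟨ha, ha', t, ht, htT⟩)
          · exact ⟨by omega, Or.inr (by simp), x, hx, Or.inl ⟨h2, by omega⟩⟩
          · exact ⟨ha, Or.inl ⟨ha', by omega⟩, t, ht, Or.inl ⟨htT, by omega⟩⟩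
      rw [eT, eT, this, Finset.card_insert_of_notMem]
      simp only [nonmin, Finset.mem_filter]
      exact fun h6 => hn h6.2.1
    · intro j hj hjy hjy2
      have : nonmin (w n) T' j = nonmin (w n) T j := by
        ext a
        simp only [nonmin, Finset.mem_filter, mem]
        simp [hjy, hjy2]
      rw [eT, eT, this]

theorem Fl.exists_rot (h : Fl w n T) (hw : Monotone w) (hl : Last w n T) {e' : ℕ → ℕ}
    (hc : CC w n (eT (w n) T) e') :
    ∃ T', IsRightRotation T T' ∧ Fl w n T' ∧ Last w n T' ∧ ∀ j ≤ n, eT (w n) T' j = e' j := by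
  obtain ⟨y, y', hy, hy', c3, c4, c5, c6, c7⟩ := hc
  obtain ⟨x, hx, hmin⟩ := h.exists_min (show y ≤ n by omega)
  have hex2 : ∃ x2, x < x2 ∧ (x2, y) ∈ T := by
    have : 0 < (nonmin (w n) T y).card := by
      change 0 < eT (w n) T y
      omega
    obtain ⟨a, ha⟩ := Finset.card_pos.mp this
    simp only [nonmin, Finset.mem_filter] at ha
    obtain ⟨_, ha, t, ht, htT⟩ := ha
    have := hmin t htT
    exact ⟨a, by omega, ha⟩
  have hexy := h.exists_above hw hl hx hmin (by omega)
  obtain ⟨x2, ⟨hx2, hx2T⟩, hx2min⟩ : ∃ x2, (x < x2 ∧ (x2, y) ∈ T) ∧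
      ∀ a, x < a → a < x2 → (a, y) ∉ T :=
    ⟨Nat.find hex2, Nat.find_spec hex2, fun a h1 h2 h3 => Nat.find_min hex2 h2 ⟨h1, h3⟩⟩
  obtain ⟨y2, ⟨hy2, hy2T⟩, hy2min⟩ : ∃ y2, (y < y2 ∧ (x, y2) ∈ T) ∧
      ∀ b, y < b → b < y2 → (x, b) ∉ T :=
    ⟨Nat.find hexy, Nat.find_spec hexy, fun a h1 h2 h3 => Nat.find_min hexy h2 ⟨h1, h3⟩⟩
  have hrot : IsRightRotationAt T ((T \ {(x, y)}) ∪ {(x2, y2)}) (x, y) (x2, y2) := by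
    refine ⟨x, y, x2, y2, rfl, rfl, hx2, hy2, hx, hy2T, hx2T, hy2min, hx2min,
      ?_, ?_, rfl⟩
    · intro a h1 h2 h3
      have : (a, y) ∈ T := h.up _ _ _ hx h1 (by have := (h.sub _ _ hx2T).2; omega)
        (fun hf => h.nf _ _ h3 (hf.mono (by omega)))
      exact hx2min a h1 h2 this
    · intro b h1 h2 h3
      exact h.nf _ _ h3 ⟨y, h1, hx2T, x, hx2, hx⟩
  obtain ⟨r1, r2, r3⟩ := h.rot hw hl hrot
  refine ⟨_, ⟨_, _, hrot⟩, r1, r2, ?_⟩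
  have hyy : y2 = y' := by
    rcases lt_trichotomy y2 y' with h6 | h6 | h6
    · have := c3 y2 hy2 h6
      have := h.defect_le hw hx hmin hy2 hy2T
      omega
    · exact h6
    · have := h.defect_gt hw hx hmin hy hy' fun i hi hi' => hy2min i hi (by omega)
      omega
  subst hyy
  obtain ⟨-, hzn, -, -, z5, z6, z7⟩ := r3
  dsimp only at z5 z6 z7
  intro j hj
  by_cases h1 : j = y
  · rw [h1]
    omega
  by_cases h2 : j = y2
  · rw [h2]
    omega
  rw [z7 j hj h1 h2, c7 j hj h1 h2]

end

/-! Geometry of `A_ν` -/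

theorem heightAt_zero (ν : List Bool) : heightAt ν 0 = 0 := by
  cases ν with
  | nil => rfl
  | cons b r => cases b <;> rfl

theorem heightAt_succ_le (ν : List Bool) (x : ℕ) (hx : x + 1 ≤ ν.count false) :
    heightAt ν x ≤ heightAt ν (x + 1) := by
  induction ν generalizing x with
  | nil => simp at hx
  | cons b r ih =>
    cases x with
    | zero => simp [heightAt_zero]
    | succ x =>
      cases b with
      | true =>
        simp only [heightAt]
        have := ih (x + 1) (by simpa using hx)
        omega
      | false =>
        simp only [heightAt]
        exact ih x (by simpa using hx)

theorem heightAt_mono (ν : List Bool) {x x' : ℕ} (h : x ≤ x') (hx : x' ≤ eastSteps ν) :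
    heightAt ν x ≤ heightAt ν x' := by
  induction x' with
  | zero =>
    have : x = 0 := by omega
    rw [this]
  | succ k ih =>
    rcases Nat.lt_or_ge k x with h1 | h1
    · have : x = k + 1 := by omega
      rw [this]
    · exact (ih h1 (by omega)).trans (heightAt_succ_le ν k hx)

theorem heightAt_le (ν : List Bool) (x : ℕ) : heightAt ν x ≤ northSteps ν := by
  induction ν generalizing x with
  | nil => cases x <;> simp [heightAt]
  | cons b r ih =>
    cases x with
    | zero => simp [heightAt_zero]
    | succ x =>
      cases b with
      | true =>
        have := ih (x + 1)
        simp only [heightAt, northSteps, List.count_cons_self] at *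
        omega
      | false =>
        have := ih x
        simp only [heightAt, northSteps] at *
        simpa using this

/-- Largest abscissa of row `y` of `A_ν`. -/
noncomputable def wd (ν : List Bool) (y : ℕ) : ℕ :=
  Nat.findGreatest (fun x => heightAt ν x ≤ y) (eastSteps ν)

theorem le_wd (ν : List Bool) (x y : ℕ) :
    x ≤ wd ν y ↔ x ≤ eastSteps ν ∧ heightAt ν x ≤ y := by
  constructor
  · intro h
    have h1 : wd ν y ≤ eastSteps ν := Nat.findGreatest_le _
    have h2 : heightAt ν (wd ν y) ≤ y :=
      Nat.findGreatest_spec (P := fun x => heightAt ν x ≤ y) (Nat.zero_le _)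
        (by simp [heightAt_zero])
    exact ⟨h.trans h1, (heightAt_mono ν h h1).trans h2⟩
  · rintro ⟨h1, h2⟩
    exact Nat.le_findGreatest h1 h2

theorem mem_APts (ν : List Bool) (x y : ℕ) :
    (x, y) ∈ APts ν ↔ y ≤ northSteps ν ∧ x ≤ wd ν y := by
  rw [le_wd]
  simp only [APts, Set.mem_ofPred_eq]
  tauto

theorem wd_mono (ν : List Bool) : Monotone (wd ν) := by
  intro y y' h
  have := (le_wd ν (wd ν y) y).1 le_rfl
  rw [le_wd]
  exact ⟨this.1, this.2.trans h⟩

theorem wd_north (ν : List Bool) : wd ν (northSteps ν) = eastSteps ν := by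
  apply le_antisymm
  · exact Nat.findGreatest_le _
  · rw [le_wd]
    exact ⟨le_rfl, heightAt_le _ _⟩

theorem Fl.isNuTree {ν : List Bool} {T : Set (ℕ × ℕ)} (h : Fl (wd ν) (northSteps ν) T)
    (hl : Last (wd ν) (northSteps ν) T) : IsNuTree ν T := by
  have hw := wd_mono ν
  have hcomp : ∀ a b c d, (a, b) ∈ T → (c, d) ∈ T → a < c → b < d → c ≤ wd ν b → False := by
    intro a b c d hab hcd hac hbd hcw
    have : (c, b) ∈ T := h.up _ _ _ hab hac hcw
      (fun hf => h.nf _ _ hcd (hf.mono (by omega)))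
    exact h.nf _ _ hcd ⟨b, hbd, this, a, hac, hab⟩
  refine ⟨?_, ?_, ?_⟩
  · rintro ⟨x, y⟩ hp
    rw [mem_APts]
    exact h.sub _ _ hp
  · rintro ⟨a, b⟩ hab ⟨c, d⟩ hcd _ hinc
    rcases hinc with ⟨h1, h2, h3⟩ | ⟨h1, h2, h3⟩
    · exact hcomp a b c d hab hcd h1 h2 ((mem_APts _ _ _).1 h3).2
    · exact hcomp c d a b hcd hab h1 h2 ((mem_APts _ _ _).1 h3).2
  · intro T' hsub hpair hTT'
    refine Set.Subset.antisymm ?_ hTT'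
    rintro ⟨x, y⟩ hp
    by_contra hnT
    obtain ⟨hyn, hxw⟩ := (mem_APts _ _ _).1 (hsub hp)
    by_cases hf : Forb T y x
    · obtain ⟨j, hj, h1, t, ht, h2⟩ := hf
      refine hpair (hTT' h2) hp (by intro he; simp at he; omega) (Or.inl ⟨ht, hj, ?_⟩)
      exact (mem_APts _ _ _).2 (h.sub _ _ h1)
    · obtain ⟨t, ht, hmin⟩ := h.exists_min hyn
      have hxt : x < t := by
        rcases lt_trichotomy x t with h1 | h1 | h1
        · exact h1
        · rw [h1] at hnT
          exact absurd ht hnT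
        · exact absurd (h.up _ _ _ ht h1 hxw hf) hnT
      have hyn' : y < northSteps ν := by
        rcases Nat.lt_or_ge y (northSteps ν) with h1 | h1
        · exact h1
        · have : y = northSteps ν := by omega
          subst this
          exact absurd (hl _ hxw hf) hnT
      obtain ⟨j, hj, hjT⟩ := h.exists_above hw hl ht hmin hyn'
      refine hpair hp (hTT' hjT) (by intro he; simp at he; omega) (Or.inl ⟨hxt, hj, ?_⟩)
      exact (mem_APts _ _ _).2 (h.sub _ _ ht)

theorem IsNuTree.exists_incomp {ν : List Bool} {T : Set (ℕ × ℕ)} (h : IsNuTree ν T) {x y : ℕ}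
    (hy : y ≤ northSteps ν) (hx : x ≤ wd ν y) (hn : (x, y) ∉ T) :
    (∃ a b, (a, b) ∈ T ∧ a < x ∧ b < y ∧ x ≤ wd ν b) ∨
      (∃ a b, (a, b) ∈ T ∧ x < a ∧ y < b ∧ a ≤ wd ν y) := by
  by_contra hc
  push Not at hc
  obtain ⟨c1, c2⟩ := hc
  have key : ∀ q ∈ T, ¬ Incompatible ν (x, y) q := by
    rintro ⟨a, b⟩ hq (⟨h1, h2, h3⟩ | ⟨h1, h2, h3⟩)
    · have := ((mem_APts _ _ _).1 h3).2
      have := c2 a b hq h1 h2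
      dsimp only at *
      omega
    · have := ((mem_APts _ _ _).1 h3).2
      have := c1 a b hq h1 h2
      dsimp only at *
      omega
  have := h.2.2 (insert (x, y) T) ?_ ?_ (Set.subset_insert _ _)
  · exact hn (this ▸ Set.mem_insert _ _)
  · rintro p (rfl | hp)
    · exact (mem_APts _ _ _).2 ⟨hy, hx⟩
    · exact h.1 hp
  · refine h.2.1.insert ?_
    intro q hq _
    exact ⟨key q hq, fun hi => key q hq (Or.symm hi)⟩

theorem IsNuTree.fl {ν : List Bool} {T : Set (ℕ × ℕ)} (h : IsNuTree ν T) :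
    Fl (wd ν) (northSteps ν) T ∧ Last (wd ν) (northSteps ν) T := by
  have hw := wd_mono ν
  have hsub : ∀ x y, (x, y) ∈ T → y ≤ northSteps ν ∧ x ≤ wd ν y :=
    fun x y hp => (mem_APts _ _ _).1 (h.1 hp)
  have hcomp : ∀ a b c d, (a, b) ∈ T → (c, d) ∈ T → a < c → b < d → c ≤ wd ν b → False := by
    intro a b c d hab hcd hac hbd hcw
    exact h.2.1 hab hcd (by intro he; simp at he; omega)
      (Or.inl ⟨hac, hbd, (mem_APts _ _ _).2 ⟨(hsub _ _ hab).1, hcw⟩⟩)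
  have hnf : ∀ x y, (x, y) ∈ T → ¬ Forb T y x := by
    rintro x y hp ⟨j, hj, h1, t, ht, h2⟩
    exact hcomp t j x y h2 hp ht hj (hsub _ _ h1).2
  have hup : ∀ y x t, (t, y) ∈ T → t < x → x ≤ wd ν y → ¬ Forb T y x → (x, y) ∈ T := by
    intro y
    induction y using Nat.strong_induction_on with
    | _ y ih =>
      intro x t ht htx hxw hf
      by_contra hn
      rcases h.exists_incomp (hsub _ _ ht).1 hxw hn with ⟨a, b, hab, h1, h2, h3⟩ |
        ⟨a, b, hab, h1, h2, h3⟩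
      · have := ih b h2 x a hab h1 h3 (fun hf' => hf (hf'.mono h2.le))
        exact hf ⟨b, h2, this, a, h1, hab⟩
      · exact hcomp t y a b ht hab (by omega) h2 h3
  have hbelow : ∀ a b x y, (a, b) ∈ T → a < x → b < y → x ≤ wd ν b → Forb T y x := by
    intro a b x y hab h1 h2 h3
    by_contra hf
    have := hup b x a hab h1 h3 (fun hf' => hf (hf'.mono h2.le))
    exact hf ⟨b, h2, this, a, h1, hab⟩
  refine ⟨⟨hsub, ?_, hnf, fun x y t => hup y x t⟩, ?_⟩
  · intro y hy
    by_contra hc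
    push Not at hc
    set P : ℕ → Prop := fun x => ¬ Forb T y x
    have hP : P (Nat.findGreatest P (wd ν y)) :=
      Nat.findGreatest_spec (Nat.zero_le _) (not_forb_zero)
    rcases h.exists_incomp hy (Nat.findGreatest_le (P := P) (wd ν y)) (hc _) with
      ⟨a, b, hab, h1, h2, h3⟩ | ⟨a, b, hab, h1, h2, h3⟩
    · exact hP (hbelow a b _ y hab h1 h2 h3)
    · have := Nat.findGreatest_is_greatest h1 h3
      have hfa : Forb T y a := not_not.mp this
      exact hnf _ _ hab (hfa.mono h2.le)
  · intro x hx hf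
    by_contra hn
    rcases h.exists_incomp le_rfl hx hn with ⟨a, b, hab, h1, h2, h3⟩ | ⟨a, b, hab, h1, h2, h3⟩
    · exact hf (hbelow a b _ _ hab h1 h2 h3)
    · have := (hsub _ _ hab).1
      omega

/-! Paths through their numbers of east steps per row -/

/-- Number of east steps at height `y`. -/
def eCnt : List Bool → ℕ → ℕ
  | [], _ => 0
  | false :: r, 0 => eCnt r 0 + 1
  | false :: r, y + 1 => eCnt r (y + 1)
  | true :: _, 0 => 0
  | true :: r, y + 1 => eCnt r y

/-- Abscissa of the last point at height `y`. -/
def lastX (μ : List Bool) (y : ℕ) : ℕ := ∑ j ∈ Finset.range (y + 1), eCnt μ j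

theorem lastX_false (μ : List Bool) (y : ℕ) : lastX (false :: μ) y = lastX μ y + 1 := by
  simp only [lastX, Finset.sum_range_succ', eCnt]
  omega

theorem lastX_true_zero (μ : List Bool) : lastX (true :: μ) 0 = 0 := by
  simp [lastX, eCnt]

theorem lastX_true_succ (μ : List Bool) (y : ℕ) : lastX (true :: μ) (y + 1) = lastX μ y := by
  simp only [lastX, Finset.sum_range_succ' _ (y + 1), eCnt]
  omega

theorem lastX_append (l r : List Bool) (k : ℕ) :
    lastX (l ++ r) (l.count true + k) = l.count false + lastX r k := by
  induction l with
  | nil => simp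
  | cons b l ih =>
    cases b with
    | false =>
      simp only [List.cons_append, lastX_false, List.count_cons_self]
      have : (false :: l).count true = l.count true := by simp
      rw [this, ih]
      omega
    | true =>
      have h1 : (true :: l).count false = l.count false := by simp
      have h2 : (true :: l).count true + k = (l.count true + k) + 1 := by simp; omega
      rw [h1, h2, List.cons_append, lastX_true_succ, ih]

theorem lastX_north (μ : List Bool) : lastX μ (northSteps μ) = eastSteps μ := by
  have := lastX_append μ [] 0
  simpa [lastX, eCnt, northSteps, eastSteps] using this

theorem exists_split (μ : List Bool) (y : ℕ) (hy : y ≤ μ.count true) :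
    ∃ l r, μ = l ++ r ∧ l.count true = y ∧ l.count false = lastX μ y := by
  induction μ generalizing y with
  | nil => exact ⟨[], [], by simp at hy; simp [hy, lastX, eCnt]⟩
  | cons b μ ih =>
    cases b with
    | false =>
      obtain ⟨l, r, h1, h2, h3⟩ := ih y (by simpa using hy)
      exact ⟨false :: l, r, by simp [h1], by simp [h2], by simp [h3, lastX_false]⟩
    | true =>
      cases y with
      | zero => exact ⟨[], true :: μ, by simp [lastX_true_zero]⟩
      | succ y =>
        obtain ⟨l, r, h1, h2, h3⟩ := ih y (by simpa using hy)
        exact ⟨true :: l, r, by simp [h1], by simp [h2], by simp [h3, lastX_true_succ]⟩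

theorem length_eq (l : List Bool) : l.length = l.count false + l.count true := by
  induction l with
  | nil => rfl
  | cons b l ih => cases b with
    | false =>
      have : (false :: l).count true = l.count true := by simp
      rw [List.length_cons, List.count_cons_self, this]
      omega
    | true =>
      have : (true :: l).count false = l.count false := by simp
      rw [List.length_cons, List.count_cons_self, this]
      omega

/-- Points of the path, on the level of prefixes. -/
theorem pointAt_last (μ : List Bool) (y : ℕ) (hy : y ≤ northSteps μ) :
    lastX μ y + y ≤ μ.length ∧ pointAt μ (lastX μ y + y) = (lastX μ y, y) := by
  obtain ⟨l, r, h1, h2, h3⟩ := exists_split μ y hy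
  have hl := length_eq l
  rw [h2, h3] at hl
  have h4 : μ.take (lastX μ y + y) = l := by
    rw [← hl, h1]
    simp
  refine ⟨?_, ?_⟩
  · rw [← hl, h1]
    simp
  · rw [pointAt, h4, h2, h3]

theorem pointAt_le_last (μ : List Bool) (i : ℕ) :
    (pointAt μ i).1 ≤ lastX μ (pointAt μ i).2 := by
  have := lastX_append (μ.take i) (μ.drop i) 0
  rw [List.take_append_drop] at this
  simp only [pointAt]
  simp only [Nat.add_zero] at this
  omega

theorem pointAt_snd_le (μ : List Bool) (i : ℕ) : (pointAt μ i).2 ≤ northSteps μ :=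
  (List.take_sublist i μ).count_le _

theorem isNuPath_iff (ν μ : List Bool) : IsNuPath ν μ ↔
    eastSteps μ = eastSteps ν ∧ northSteps μ = northSteps ν ∧
      ∀ y ≤ northSteps ν, lastX μ y ≤ wd ν y := by
  constructor
  · rintro ⟨h1, h2, h3⟩
    refine ⟨h1, h2, fun y hy => ?_⟩
    obtain ⟨h4, h5⟩ := pointAt_last μ y (by omega)
    have := h3 _ h4
    rw [h5, mem_APts] at this
    exact this.2
  · rintro ⟨h1, h2, h3⟩
    refine ⟨h1, h2, fun i hi => ?_⟩
    have h4 := pointAt_le_last μ i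
    have h5 := pointAt_snd_le μ i
    have h6 := h3 (pointAt μ i).2 (by omega)
    exact (mem_APts ν (pointAt μ i).1 (pointAt μ i).2).2 ⟨by omega, by omega⟩

theorem path_ext (μ μ' : List Bool) (hn : northSteps μ = northSteps μ')
    (he : ∀ y ≤ northSteps μ, eCnt μ y = eCnt μ' y) : μ = μ' := by
  induction μ generalizing μ' with
  | nil =>
    cases μ' with
    | nil => rfl
    | cons b r =>
      cases b with
      | false =>
        have := he 0 (Nat.zero_le _)
        simp [eCnt] at this
      | true => simp [northSteps] at hn
  | cons b l ih =>
    cases μ' with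
    | nil =>
      cases b with
      | false =>
        have := he 0 (Nat.zero_le _)
        simp [eCnt] at this
      | true => simp [northSteps] at hn
    | cons b' r =>
      have h0 := he 0 (Nat.zero_le _)
      cases b with
      | false =>
        cases b' with
        | false =>
          rw [ih r (by simpa [northSteps] using hn)]
          intro y hy
          have := he y (by simpa [northSteps] using hy)
          cases y with
          | zero => simpa [eCnt] using this
          | succ y => simpa [eCnt] using this
        | true => simp [eCnt] at h0
      | true =>
        cases b' with
        | false => simp [eCnt] at h0
        | true =>
          rw [ih r (by simpa [northSteps] using hn)]
          intro y hy
          have := he (y + 1) (by simpa [northSteps] using hy)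
          simpa [eCnt] using this

theorem eCnt_replicate_zero (k : ℕ) (r : List Bool) :
    eCnt (List.replicate k false ++ r) 0 = eCnt r 0 + k := by
  induction k with
  | zero => simp
  | succ k ih =>
    rw [List.replicate_succ, List.cons_append, eCnt, ih]
    omega

theorem eCnt_replicate_succ (k : ℕ) (r : List Bool) (y : ℕ) :
    eCnt (List.replicate k false ++ r) (y + 1) = eCnt r (y + 1) := by
  induction k with
  | zero => simp
  | succ k ih => rw [List.replicate_succ, List.cons_append, eCnt, ih]

theorem exists_path (n : ℕ) (e : ℕ → ℕ) :
    ∃ μ, northSteps μ = n ∧ ∀ y ≤ n, eCnt μ y = e y := by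
  induction n generalizing e with
  | zero =>
    refine ⟨List.replicate (e 0) false ++ [], by simp [northSteps, List.count_replicate], ?_⟩
    intro y hy
    have : y = 0 := by omega
    subst this
    rw [eCnt_replicate_zero]
    simp [eCnt]
  | succ n ih =>
    obtain ⟨μ, h1, h2⟩ := ih fun y => e (y + 1)
    refine ⟨List.replicate (e 0) false ++ true :: μ, ?_, ?_⟩
    · simp only [northSteps] at h1 ⊢
      simp [List.count_append, List.count_replicate, h1]
    · intro y hy
      cases y with
      | zero =>
        rw [eCnt_replicate_zero]
        simp [eCnt]
      | succ y =>
        rw [eCnt_replicate_succ, eCnt]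
        exact h2 y (by omega)

theorem pointsAtHeight_eq (μ : List Bool) (y : ℕ) (hy : y ≤ northSteps μ) :
    pointsAtHeight μ y = eCnt μ y + 1 := by
  induction μ generalizing y with
  | nil =>
    simp [northSteps] at hy
    simp [pointsAtHeight, eCnt, hy]
  | cons b r ih =>
    rw [pointsAtHeight, List.length_cons, List.range_succ_eq_map, List.filter_cons,
      List.filter_map]
    cases b with
    | false =>
      have h1 := ih y (by simpa [northSteps] using hy)
      rw [pointsAtHeight] at h1
      cases y with
      | zero =>
        simp only [Function.comp_def, eCnt]
        simpa using h1
      | succ y =>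
        simp only [Function.comp_def, eCnt]
        simpa using h1
    | true =>
      cases y with
      | zero => simp [Function.comp_def, eCnt]
      | succ y =>
        have h1 := ih y (by simpa [northSteps] using hy)
        rw [pointsAtHeight] at h1
        simp only [Function.comp_def, eCnt]
        simpa using h1

/-! The right flushing map -/

/-- Forbidden abscissas. -/
def rfF (ν : List Bool) (c : ℕ → ℕ) : ℕ → List ℕ
  | 0 => []
  | y + 1 => rfF ν c y ++
      (((rowAvail ν y).filter fun x => decide (x ∉ rfF ν c y)).take (c y)).dropLast

def rfA (ν : List Bool) (c : ℕ → ℕ) (y : ℕ) : List ℕ :=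
  (rowAvail ν y).filter fun x => decide (x ∉ rfF ν c y)

/-- Placed abscissas. -/
def rfP (ν : List Bool) (c : ℕ → ℕ) (y : ℕ) : List ℕ := (rfA ν c y).take (c y)

theorem rfF_succ (ν : List Bool) (c : ℕ → ℕ) (y : ℕ) :
    rfF ν c (y + 1) = rfF ν c y ++ (rfP ν c y).dropLast := rfl

theorem mem_rflushAux (ν : List Bool) (c : ℕ → ℕ) (k y : ℕ) (p : ℕ × ℕ) :
    p ∈ rflushAux ν ((List.range k).map fun i => c (y + i)) y (rfF ν c y) ↔
      y ≤ p.2 ∧ p.2 < y + k ∧ p.1 ∈ rfP ν c p.2 := by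
  induction k generalizing y with
  | zero =>
    simp [rflushAux]
    omega
  | succ k ih =>
    have h1 : (List.range (k + 1)).map (fun i => c (y + i)) =
        c y :: (List.range k).map fun i => c (y + 1 + i) := by
      rw [List.range_succ_eq_map]
      simp only [List.map_cons, List.map_map, Nat.add_zero]
      congr 1
      apply List.map_congr_left
      intro i _
      simp only [Function.comp]
      congr 1
      omega
    rw [h1, rflushAux]
    change p ∈ (rfP ν c y).map (fun x => (x, y)) ++ rflushAux ν _ (y + 1) (rfF ν c (y + 1)) ↔ _
    rw [List.mem_append, ih]
    simp only [List.mem_map]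
    constructor
    · rintro (⟨a, ha, rfl⟩ | ⟨h1, h2, h3⟩)
      · exact ⟨le_rfl, by dsimp only; omega, ha⟩
      · exact ⟨by omega, by omega, h3⟩
    · rintro ⟨h1, h2, h3⟩
      rcases Nat.lt_or_ge y p.2 with h | h
      · exact Or.inr ⟨h, by omega, h3⟩
      · have : p.2 = y := by omega
        rw [this] at h3
        exact Or.inl ⟨p.1, h3, by rw [← this]⟩

theorem mem_Rflush (ν μ : List Bool) (x y : ℕ) :
    (x, y) ∈ Rflush ν μ ↔ y ≤ northSteps ν ∧ x ∈ rfP ν (pointsAtHeight μ) y := by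
  have := mem_rflushAux ν (pointsAtHeight μ) (northSteps ν + 1) 0 (x, y)
  simp only [Nat.zero_add, Nat.zero_le, true_and, Nat.lt_succ_iff] at this
  exact this

theorem mem_rowAvail (ν : List Bool) (x y : ℕ) : x ∈ rowAvail ν y ↔ x ≤ wd ν y := by
  rw [le_wd]
  simp [rowAvail]

theorem rowAvail_sorted (ν : List Bool) (y : ℕ) : (rowAvail ν y).Pairwise (· > ·) := by
  rw [rowAvail, List.pairwise_reverse]
  exact List.Pairwise.filter _ List.pairwise_lt_range

theorem rfA_sorted (ν : List Bool) (c : ℕ → ℕ) (y : ℕ) : (rfA ν c y).Pairwise (· > ·) :=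
  (rowAvail_sorted ν y).filter _

theorem rfP_sorted (ν : List Bool) (c : ℕ → ℕ) (y : ℕ) : (rfP ν c y).Pairwise (· > ·) :=
  (rfA_sorted ν c y).sublist (List.take_sublist _ _)

theorem sorted_take {L : List ℕ} (h : L.Pairwise (· > ·)) {k t x : ℕ} (ht : t ∈ L.take k)
    (hx : x ∈ L) (htx : t < x) : x ∈ L.take k := by
  rw [← List.take_append_drop k L, List.mem_append] at hx
  rcases hx with hx | hx
  · exact hx
  · rw [← List.take_append_drop k L, List.pairwise_append] at h
    have := h.2.2 t ht x hx
    omega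

theorem sorted_dropLast {L : List ℕ} (h : L.Pairwise (· > ·)) {x : ℕ} :
    x ∈ L.dropLast ↔ x ∈ L ∧ ∃ t < x, t ∈ L := by
  by_cases hL : L = []
  · simp [hL]
  have heq := List.dropLast_append_getLast hL
  rw [← heq, List.pairwise_append] at h
  obtain ⟨-, -, h3⟩ := h
  constructor
  · intro hx
    exact ⟨List.mem_of_mem_dropLast hx, L.getLast hL, h3 x hx _ (by simp), List.getLast_mem hL⟩
  · rintro ⟨hx, t, ht, htL⟩
    rw [← heq, List.mem_append] at hx htL
    rcases hx with hx | hx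
    · exact hx
    · simp only [List.mem_singleton] at hx htL
      rcases htL with h4 | h4
      · have := h3 t h4 _ (List.mem_singleton.mpr rfl)
        omega
      · omega

theorem forb_Rflush (ν μ : List Bool) (x y : ℕ) (hy : y ≤ northSteps ν + 1) :
    Forb (Rflush ν μ) y x ↔ x ∈ rfF ν (pointsAtHeight μ) y := by
  induction y with
  | zero => simp [Forb, rfF]
  | succ y ih =>
    rw [forb_succ, ih (by omega), rfF_succ, List.mem_append, sorted_dropLast (rfP_sorted _ _ _)]
    have : y ≤ northSteps ν := by omega
    simp only [mem_Rflush, this, true_and]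

theorem length_rfF_le (ν : List Bool) (c : ℕ → ℕ) (y : ℕ) :
    (rfF ν c y).length ≤ ∑ j ∈ Finset.range y, (c j - 1) := by
  induction y with
  | zero => simp [rfF]
  | succ y ih =>
    rw [rfF_succ, List.length_append, Finset.sum_range_succ, List.length_dropLast]
    have : (rfP ν c y).length ≤ c y := by
      rw [rfP]
      exact List.length_take_le _ _
    omega

theorem length_rfA (ν : List Bool) (c : ℕ → ℕ) (y : ℕ) :
    wd ν y + 1 ≤ (rfA ν c y).length + (rfF ν c y).length := by
  have h : Finset.range (wd ν y + 1) ⊆ (rfA ν c y).toFinset ∪ (rfF ν c y).toFinset := by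
    intro a ha
    simp only [Finset.mem_range] at ha
    simp only [Finset.mem_union, List.mem_toFinset, rfA, List.mem_filter, mem_rowAvail,
      decide_eq_true_eq]
    by_cases h : a ∈ rfF ν c y
    · exact Or.inr h
    · exact Or.inl ⟨by omega, h⟩
  have h1 := Finset.card_le_card h
  have h2 := Finset.card_union_le (rfA ν c y).toFinset (rfF ν c y).toFinset
  have h3 := List.toFinset_card_le (rfA ν c y)
  have h4 := List.toFinset_card_le (rfF ν c y)
  rw [Finset.card_range] at h1
  omega

theorem length_rfP {ν μ : List Bool} (hμ : IsNuPath ν μ) {y : ℕ} (hy : y ≤ northSteps ν) :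
    (rfP ν (pointsAtHeight μ) y).length = eCnt μ y + 1 := by
  obtain ⟨h1, h2, h3⟩ := (isNuPath_iff ν μ).1 hμ
  have h4 := h3 y hy
  have h5 := length_rfF_le ν (pointsAtHeight μ) y
  have h6 := length_rfA ν (pointsAtHeight μ) y
  have h7 : ∑ j ∈ Finset.range y, (pointsAtHeight μ j - 1) = ∑ j ∈ Finset.range y, eCnt μ j := by
    refine Finset.sum_congr rfl fun j hj => ?_
    simp only [Finset.mem_range] at hj
    rw [pointsAtHeight_eq μ j (by omega)]
    omega
  rw [lastX, Finset.sum_range_succ] at h4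
  rw [rfP, List.length_take, pointsAtHeight_eq μ y (by omega)]
  omega

theorem Rflush_fl {ν μ : List Bool} (hμ : IsNuPath ν μ) :
    Fl (wd ν) (northSteps ν) (Rflush ν μ) ∧ Last (wd ν) (northSteps ν) (Rflush ν μ) ∧
      ∀ y ≤ northSteps ν, eT (wd ν (northSteps ν)) (Rflush ν μ) y = eCnt μ y := by
  have hw := wd_mono ν
  have memP : ∀ x y, x ∈ rfP ν (pointsAtHeight μ) y →
      x ≤ wd ν y ∧ x ∉ rfF ν (pointsAtHeight μ) y := by
    intro x y hx
    have := (List.take_sublist _ _).subset hx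
    simpa only [rfA, List.mem_filter, mem_rowAvail, decide_eq_true_eq] using this
  have hfl : Fl (wd ν) (northSteps ν) (Rflush ν μ) := by
    refine ⟨?_, ?_, ?_, ?_⟩
    · intro x y hp
      rw [mem_Rflush] at hp
      exact ⟨hp.1, (memP _ _ hp.2).1⟩
    · intro y hy
      have := length_rfP hμ hy
      obtain ⟨x, hx⟩ := List.exists_mem_of_length_pos (l := rfP ν (pointsAtHeight μ) y) (by omega)
      exact ⟨x, (mem_Rflush _ _ _ _).2 ⟨hy, hx⟩⟩
    · intro x y hp
      rw [mem_Rflush] at hp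
      rw [forb_Rflush _ _ _ _ (by omega)]
      exact (memP _ _ hp.2).2
    · intro x y t ht htx hxw hf
      rw [mem_Rflush] at ht ⊢
      rw [forb_Rflush _ _ _ _ (by omega)] at hf
      refine ⟨ht.1, sorted_take (rfA_sorted _ _ _) ht.2 ?_ htx⟩
      simp only [rfA, List.mem_filter, mem_rowAvail, decide_eq_true_eq]
      exact ⟨hxw, hf⟩
  have he : ∀ y ≤ northSteps ν,
      eT (wd ν (northSteps ν)) (Rflush ν μ) y = eCnt μ y := by
    intro y hy
    have h1 := length_rfP hμ hy
    have h2 : nonmin (wd ν (northSteps ν)) (Rflush ν μ) y =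
        (rfP ν (pointsAtHeight μ) y).dropLast.toFinset := by
      ext a
      simp only [nonmin, Finset.mem_filter, Finset.mem_range, List.mem_toFinset, mem_Rflush, hy,
        true_and, sorted_dropLast (rfP_sorted _ _ _)]
      constructor
      · exact fun h => h.2
      · intro h
        have := (memP _ _ h.1).1
        have := hw hy
        exact ⟨by omega, h⟩
    have hnd : (rfP ν (pointsAtHeight μ) y).dropLast.Nodup := by
      have : (rfP ν (pointsAtHeight μ) y).Nodup :=
        (rfP_sorted ν (pointsAtHeight μ) y).imp fun h => ne_of_gt h
      exact this.sublist (List.dropLast_sublist _)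
    rw [eT, h2, List.toFinset_card_of_nodup hnd, List.length_dropLast]
    omega
  refine ⟨hfl, hfl.last hw ?_, he⟩
  have h2 := lastX_north μ
  rw [lastX, hμ.2.1] at h2
  rw [wd_north, ← hμ.1, ← h2]
  refine Finset.sum_congr rfl fun j hj => ?_
  simp only [Finset.mem_range] at hj
  rw [h2, hμ.1, ← wd_north]
  exact he j (by omega)

/-! Covers of the Tamari order -/

theorem horiz_eq {ν : List Bool} {p : ℕ × ℕ} (hp : p ∈ APts ν) :
    horiz ν p + p.1 = wd ν p.2 := by
  obtain ⟨x, y⟩ := p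
  have hA := (mem_APts _ _ _).1 hp
  have : horiz ν (x, y) = wd ν y - x := by
    apply IsGreatest.csSup_eq
    constructor
    · change (x + (wd ν y - x), y) ∈ APts ν
      rw [mem_APts]
      omega
    · intro k hk
      have hk' : (x + k, y) ∈ APts ν := hk
      rw [mem_APts] at hk'
      omega
  dsimp only
  omega

theorem pointAt_succ_true {μ : List Bool} {i : ℕ} (h : μ.getD i false = true) :
    i < μ.length ∧ pointAt μ (i + 1) = ((pointAt μ i).1, (pointAt μ i).2 + 1) := by
  have hi : i < μ.length := by
    by_contra hc
    rw [List.getD_eq_default _ _ (by omega)] at h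
    simp at h
  rw [List.getD_eq_getElem _ _ hi] at h
  refine ⟨hi, ?_⟩
  simp only [pointAt]
  rw [List.take_succ_eq_append_getElem hi, h]
  simp

theorem pointAt_succ_false {μ : List Bool} {i : ℕ} (h : μ.getD i true = false) :
    i < μ.length ∧ pointAt μ (i + 1) = ((pointAt μ i).1 + 1, (pointAt μ i).2) := by
  have hi : i < μ.length := by
    by_contra hc
    rw [List.getD_eq_default _ _ (by omega)] at h
    simp at h
  rw [List.getD_eq_getElem _ _ hi] at h
  refine ⟨hi, ?_⟩
  simp only [pointAt]
  rw [List.take_succ_eq_append_getElem hi, h]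
  simp

theorem pointAt_snd_mono (μ : List Bool) {i j : ℕ} (h : i ≤ j) :
    (pointAt μ i).2 ≤ (pointAt μ j).2 := by
  simp only [pointAt]
  exact (List.take_sublist_take_left h).count_le _

theorem horiz_step_true {ν μ : List Bool} (hμ : IsNuPath ν μ) {i : ℕ}
    (h : μ.getD i false = true) :
    horiz ν (pointAt μ i) ≤ horiz ν (pointAt μ (i + 1)) := by
  obtain ⟨hi, he⟩ := pointAt_succ_true h
  have h1 := horiz_eq (hμ.2.2 i (by omega))
  have h2 := horiz_eq (hμ.2.2 (i + 1) (by omega))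
  have h3 := wd_mono ν (show (pointAt μ i).2 ≤ (pointAt μ i).2 + 1 by omega)
  rw [he] at h2 ⊢
  dsimp only at h2
  omega

theorem horiz_step {ν μ : List Bool} (hμ : IsNuPath ν μ) {i : ℕ} (hi : i < μ.length) :
    horiz ν (pointAt μ i) ≤ horiz ν (pointAt μ (i + 1)) + 1 := by
  by_cases h : μ.getD i false = true
  · have := horiz_step_true hμ h
    omega
  · have h' : μ.getD i true = false := by
      rw [List.getD_eq_getElem _ _ hi] at h ⊢
      simpa using h
    obtain ⟨hi, he⟩ := pointAt_succ_false h'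
    have h1 := horiz_eq (hμ.2.2 i (by omega))
    have h2 := horiz_eq (hμ.2.2 (i + 1) (by omega))
    rw [he] at h2 ⊢
    dsimp only at h2
    omega

theorem eCnt_insert (A R : List Bool) (k : ℕ) :
    eCnt (A ++ false :: R) k = eCnt (A ++ R) k + if k = A.count true then 1 else 0 := by
  induction A generalizing k with
  | nil =>
    cases k with
    | zero => simp [eCnt]
    | succ k => simp [eCnt]
  | cons b A ih =>
    cases b with
    | false =>
      cases k with
      | zero =>
        simp only [List.cons_append, eCnt, ih]
        simp
        omega
      | succ k =>
        simp only [List.cons_append, eCnt, ih]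
        simp
    | true =>
      cases k with
      | zero => simp [eCnt]
      | succ k =>
        simp only [List.cons_append, eCnt, ih]
        simp

theorem path_decomp {μ : List Bool} {i j : ℕ} (hi : 0 < i) (hij : i < j) (hj : j ≤ μ.length)
    (h : μ.getD (i - 1) true = false) :
    μ = μ.take (i - 1) ++ false :: ((μ.drop i).take (j - i) ++ μ.drop j) ∧
    μ.take j = μ.take (i - 1) ++ false :: (μ.drop i).take (j - i) := by
  have h1 : μ = μ.take (i - 1) ++ false :: ((μ.drop i).take (j - i) ++ μ.drop j) := by
    conv_lhs => rw [← List.take_append_drop (i - 1) μ]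
    congr 1
    have hi' : i - 1 < μ.length := by omega
    rw [List.drop_eq_getElem_cons hi']
    rw [List.getD_eq_getElem _ _ hi'] at h
    rw [h, show i - 1 + 1 = i by omega]
    congr 1
    conv_lhs => rw [← List.take_append_drop (j - i) (μ.drop i)]
    rw [List.drop_drop, show i + (j - i) = j by omega]
  refine ⟨h1, ?_⟩
  have h2 : (μ.take (i - 1) ++ false :: (μ.drop i).take (j - i)).length = j := by
    simp
    omega
  have h3 : μ = (μ.take (i - 1) ++ false :: (μ.drop i).take (j - i)) ++ μ.drop j := by
    conv_lhs => rw [h1]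
    simp
  have h4 := congrArg (List.take j) h3
  rw [List.take_append_of_le_length (by omega)] at h4
  rw [h4]
  exact List.take_of_length_le (by omega)

theorem cover_core {ν μ μ' : List Bool} (hμ : IsNuPath ν μ) {i j : ℕ} (hi : 0 < i) (hij : i < j)
    (hj : j ≤ μ.length) (he : μ.getD (i - 1) true = false) (hn : μ.getD i false = true)
    (hh : horiz ν (pointAt μ j) = horiz ν (pointAt μ i))
    (hne : ∀ k, i < k → k < j → horiz ν (pointAt μ k) ≠ horiz ν (pointAt μ i))
    (hμ' : μ' = μ.take (i - 1) ++ (μ.drop i).take (j - i) ++ [false] ++ μ.drop j) :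
    northSteps μ' = northSteps μ ∧
    CCat (wd ν) (northSteps ν) (eCnt μ) (eCnt μ') (pointAt μ i).2 (pointAt μ j).2 := by
  obtain ⟨d1, d2⟩ := path_decomp hi hij hj he
  obtain ⟨-, s1⟩ := pointAt_succ_true hn
  obtain ⟨-, s2⟩ := pointAt_succ_false he
  rw [show i - 1 + 1 = i by omega] at s2
  have hlt : (pointAt μ i).2 < (pointAt μ j).2 := by
    have := pointAt_snd_mono μ (show i + 1 ≤ j by omega)
    rw [s1] at this
    exact this
  have hjn := pointAt_snd_le μ j
  rw [hμ.2.1] at hjn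
  have hlast : (pointAt μ i).1 = lastX μ (pointAt μ i).2 := by
    have h1 := lastX_append (μ.take (i + 1)) (μ.drop (i + 1)) 0
    have h2 := pointAt_le_last μ i
    have h3 := lastX_append (μ.take i) (μ.drop i) 0
    rw [List.take_append_drop] at h3
    have hi' : i < μ.length := by omega
    rw [List.drop_eq_getElem_cons hi'] at h3
    rw [List.getD_eq_getElem _ _ hi'] at hn
    rw [hn, lastX_true_zero] at h3
    simp only [pointAt]
    simpa using h3.symm
  have hgt : ∀ k, i < k → k < j → horiz ν (pointAt μ i) < horiz ν (pointAt μ k) := by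
    intro k
    induction k with
    | zero => intro h; omega
    | succ k ih =>
      intro h1 h2
      have h3 := hne (k + 1) h1 h2
      rcases Nat.lt_or_ge i k with h4 | h4
      · have := ih h4 (by omega)
        have := horiz_step hμ (show k < μ.length by omega)
        omega
      · have : k = i := by omega
        subst this
        have := horiz_step_true hμ hn
        omega
  have hHi := horiz_eq (hμ.2.2 i (by omega))
  have hHj := horiz_eq (hμ.2.2 j (by omega))
  have hμ'' : μ' = (μ.take (i - 1) ++ (μ.drop i).take (j - i)) ++ false :: μ.drop j := by
    rw [hμ']
    simp
  have hcA : (μ.take (i - 1)).count true = (pointAt μ i).2 := by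
    rw [s2]
    rfl
  have hcM : (μ.take (i - 1) ++ (μ.drop i).take (j - i)).count true = (pointAt μ j).2 := by
    simp only [pointAt]
    rw [d2]
    simp
  have e1 : ∀ k, eCnt μ k = eCnt (μ.take (i - 1) ++ ((μ.drop i).take (j - i) ++ μ.drop j)) k +
      if k = (pointAt μ i).2 then 1 else 0 := by
    intro k
    rw [← hcA, ← eCnt_insert, ← d1]
  have e2 : ∀ k, eCnt μ' k = eCnt (μ.take (i - 1) ++ ((μ.drop i).take (j - i) ++ μ.drop j)) k +
      if k = (pointAt μ j).2 then 1 else 0 := by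
    intro k
    rw [hμ'', eCnt_insert, hcM, List.append_assoc]
  refine ⟨?_, hlt, hjn, ?_, ?_, ?_, ?_, ?_⟩
  · have := congrArg (List.count true) d1
    rw [northSteps, northSteps, hμ'', this]
    simp
  · intro k hk hk'
    obtain ⟨l1, l2⟩ := pointAt_last μ k (by rw [hμ.2.1]; omega)
    have g1 : i < lastX μ k + k := by
      by_contra hc
      have := pointAt_snd_mono μ (not_lt.mp hc)
      rw [l2] at this
      dsimp only at this
      omega
    have g2 : lastX μ k + k < j := by
      by_contra hc
      have := pointAt_snd_mono μ (not_lt.mp hc)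
      rw [l2] at this
      dsimp only at this
      omega
    have g3 := hgt _ g1 g2
    have g4 := horiz_eq (hμ.2.2 _ l1)
    rw [l2] at g3 g4
    dsimp only at g4
    change wd ν (pointAt μ i).2 + lastX μ k < wd ν k + lastX μ (pointAt μ i).2
    omega
  · have := pointAt_le_last μ j
    change wd ν (pointAt μ j).2 + lastX μ (pointAt μ i).2 ≤
      wd ν (pointAt μ i).2 + lastX μ (pointAt μ j).2
    omega
  · rw [e1, e2, if_pos rfl, if_neg (by omega)]
  · rw [e1, e2, if_pos rfl, if_neg (by omega)]
  · intro k hk h1 h2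
    rw [e1, e2, if_neg h1, if_neg h2]

theorem TamariCover.cc {ν μ μ' : List Bool} (h : TamariCover ν μ μ') :
    CC (wd ν) (northSteps ν) (eCnt μ) (eCnt μ') := by
  obtain ⟨hμ, -, i, j, h1, h2, h3, h4, h5, h6, h7, h8⟩ := h
  exact ⟨_, _, (cover_core hμ h1 h2 h3 h4 h5 h6 h7 h8).2⟩

theorem CCat.unique {w : ℕ → ℕ} {n : ℕ} {e e1 e2 : ℕ → ℕ} {y y1 y2 : ℕ}
    (h1 : CCat w n e e1 y y1) (h2 : CCat w n e e2 y y2) : ∀ j ≤ n, e1 j = e2 j := by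
  obtain ⟨a1, a2, a3, a4, a5, a6, a7⟩ := h1
  obtain ⟨b1, b2, b3, b4, b5, b6, b7⟩ := h2
  have : y1 = y2 := by
    rcases lt_trichotomy y1 y2 with h | h | h
    · have := b3 y1 a1 h
      omega
    · exact h
    · have := a3 y2 b1 h
      omega
  subst this
  intro j hj
  by_cases h1 : j = y
  · subst h1
    omega
  by_cases h2 : j = y1
  · subst h2
    omega
  rw [a7 j hj h1 h2, b7 j hj h1 h2]

theorem valley_steps {μ : List Bool} {y : ℕ} (hy : y < northSteps μ) (he : 1 ≤ eCnt μ y) :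
    0 < lastX μ y + y ∧ μ.getD (lastX μ y + y - 1) true = false ∧
      μ.getD (lastX μ y + y) false = true := by
  obtain ⟨l, r, h1, h2, h3⟩ := exists_split μ y hy.le
  have hl := length_eq l
  rw [h2, h3] at hl
  have hr := lastX_append l r 0
  rw [← h1, h2, h3, Nat.add_zero] at hr
  obtain ⟨r', rfl⟩ : ∃ r', r = true :: r' := by
    cases r with
    | nil =>
      rw [List.append_nil] at h1
      rw [northSteps, h1, h2] at hy
      omega
    | cons b r' =>
      cases b with
      | true => exact ⟨r', rfl⟩
      | false =>
        rw [lastX_false] at hr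
        omega
  have hlpos : 0 < lastX μ y := by
    rw [lastX, Finset.sum_range_succ]
    omega
  have hne : l ≠ [] := by
    rintro rfl
    simp at h3
    omega
  obtain ⟨l', b, rfl⟩ : ∃ l' b, l = l' ++ [b] :=
    ⟨l.dropLast, l.getLast hne, (List.dropLast_append_getLast hne).symm⟩
  have hb : b = false := by
    cases b with
    | false => rfl
    | true =>
      exfalso
      have h5 := lastX_append l' (true :: true :: r') 0
      rw [lastX_true_zero] at h5
      have h6 : μ = l' ++ true :: true :: r' := by rw [h1]; simp
      rw [← h6] at h5
      have h7 : y = l'.count true + 1 := by rw [← h2]; simp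
      have h8 : lastX μ y = l'.count false := by rw [← h3]; simp
      have h9 : lastX μ y = lastX μ (l'.count true) + eCnt μ y := by
        rw [h7]
        exact Finset.sum_range_succ _ _
      simp only [Nat.add_zero] at h5
      omega
  subst hb
  have hl' : l'.length + 1 = lastX μ y + y := by
    rw [← hl]
    simp
  refine ⟨by omega, ?_, ?_⟩
  · rw [← hl', h1]
    simp
  · rw [← hl', h1]
    simp

theorem cover_of_cc {ν μ μ' : List Bool} (hμ : IsNuPath ν μ) (hμ' : IsNuPath ν μ')
    (h : CC (wd ν) (northSteps ν) (eCnt μ) (eCnt μ')) : TamariCover ν μ μ' := by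
  obtain ⟨y, y', hc⟩ := h
  have hc' := hc
  obtain ⟨a1, a2, a3, a4, a5, a6, a7⟩ := hc
  have hyn : y < northSteps μ := by rw [hμ.2.1]; omega
  obtain ⟨v1, v2, v3⟩ := valley_steps hyn (by omega)
  obtain ⟨p1, p2⟩ := pointAt_last μ y hyn.le
  obtain ⟨q1, q2⟩ := pointAt_last μ y' (by rw [hμ.2.1]; omega)
  set i := lastX μ y + y with hi
  have hex : ∃ k, i < k ∧ k ≤ μ.length ∧ horiz ν (pointAt μ k) ≤ horiz ν (pointAt μ i) := by
    refine ⟨lastX μ y' + y', ?_, q1, ?_⟩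
    · by_contra hcon
      have := pointAt_snd_mono μ (not_lt.mp hcon)
      rw [p2, q2] at this
      dsimp only at this
      omega
    · have h1 := horiz_eq (hμ.2.2 _ p1)
      have h2 := horiz_eq (hμ.2.2 _ q1)
      rw [p2] at h1 ⊢
      rw [q2] at h2 ⊢
      dsimp only at h1 h2
      change wd ν y' + lastX μ y ≤ wd ν y + lastX μ y' at a4
      omega
  obtain ⟨j, ⟨j1, j2, j3⟩, jmin⟩ : ∃ j, (i < j ∧ j ≤ μ.length ∧
      horiz ν (pointAt μ j) ≤ horiz ν (pointAt μ i)) ∧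
      ∀ k, i < k → k < j → horiz ν (pointAt μ i) < horiz ν (pointAt μ k) := by
    refine ⟨Nat.find hex, Nat.find_spec hex, fun k h1 h2 => ?_⟩
    have h3 := (Nat.find_spec hex).2.1
    have h4 := Nat.find_min hex h2
    by_contra hcon
    exact h4 ⟨h1, by omega, by omega⟩
  have hh : horiz ν (pointAt μ j) = horiz ν (pointAt μ i) := by
    apply le_antisymm j3
    rcases Nat.lt_or_ge (i + 1) j with h1 | h1
    · have h2 := jmin (j - 1) (by omega) (by omega)
      have h3 := horiz_step hμ (show j - 1 < μ.length by omega)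
      rw [show j - 1 + 1 = j by omega] at h3
      omega
    · have : j = i + 1 := by omega
      subst this
      exact horiz_step_true hμ v3
  have hne : ∀ k, i < k → k < j → horiz ν (pointAt μ k) ≠ horiz ν (pointAt μ i) :=
    fun k h1 h2 => (jmin k h1 h2).ne'
  obtain ⟨c1, c2⟩ := cover_core hμ v1 j1 j2 v2 v3 hh hne rfl
  rw [p2] at c2
  refine ⟨hμ, hμ', i, j, v1, j1, j2, v2, v3, hh, hne, ?_⟩
  apply path_ext
  · rw [c1, hμ.2.1, hμ'.2.1]
  · rw [hμ'.2.1]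
    exact hc'.unique c2

/-! Main theorem -/

theorem rflush_injOn {ν μ μ' : List Bool} (hμ : IsNuPath ν μ) (hμ' : IsNuPath ν μ')
    (h : Rflush ν μ = Rflush ν μ') : μ = μ' := by
  apply path_ext
  · rw [hμ.2.1, hμ'.2.1]
  · intro y hy
    rw [hμ.2.1] at hy
    rw [← (Rflush_fl hμ).2.2 y hy, ← (Rflush_fl hμ').2.2 y hy, h]

theorem rflush_isNuTree {ν μ : List Bool} (hμ : IsNuPath ν μ) : IsNuTree ν (Rflush ν μ) :=
  (Rflush_fl hμ).1.isNuTree (Rflush_fl hμ).2.1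

theorem rflush_surj {ν : List Bool} {T : Set (ℕ × ℕ)} (hT : IsNuTree ν T) :
    ∃ μ, IsNuPath ν μ ∧ Rflush ν μ = T := by
  obtain ⟨hfl, hl⟩ := hT.fl
  have hw := wd_mono ν
  obtain ⟨μ, h1, h2⟩ := exists_path (northSteps ν) (eT (wd ν (northSteps ν)) T)
  have hs : ∀ y ≤ northSteps ν, lastX μ y =
      ∑ j ∈ Finset.range (y + 1), eT (wd ν (northSteps ν)) T j := by
    intro y hy
    refine Finset.sum_congr rfl fun j hj => h2 j ?_
    simp only [Finset.mem_range] at hj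
    omega
  have hμ : IsNuPath ν μ := by
    rw [isNuPath_iff]
    refine ⟨?_, h1, ?_⟩
    · rw [← lastX_north, h1, hs _ le_rfl, hfl.sum_eq hw hl, wd_north]
    · intro y hy
      rw [hs y hy]
      exact hfl.sum_le hw _
  refine ⟨μ, hμ, (Rflush_fl hμ).1.unique hfl hw fun y hy => ?_⟩
  rw [(Rflush_fl hμ).2.2 y hy, h2 y hy]

theorem rotation_of_cover {ν μ μ' : List Bool} (h : TamariCover ν μ μ') :
    IsRightRotation (Rflush ν μ) (Rflush ν μ') := by
  obtain ⟨f1, f2, f3⟩ := Rflush_fl h.1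
  obtain ⟨g1, g2, g3⟩ := Rflush_fl h.2.1
  have hc := h.cc.congr (fun j hj => (f3 j hj).symm) (fun j hj => (g3 j hj).symm)
  obtain ⟨T', r1, r2, r3, r4⟩ := f1.exists_rot (wd_mono ν) f2 hc
  rwa [← r2.unique g1 (wd_mono ν) r4]

theorem cover_of_rotation {ν μ μ' : List Bool} (hμ : IsNuPath ν μ) (hμ' : IsNuPath ν μ')
    (h : IsRightRotation (Rflush ν μ) (Rflush ν μ')) : TamariCover ν μ μ' := by
  obtain ⟨f1, f2, f3⟩ := Rflush_fl hμ
  obtain ⟨g1, g2, g3⟩ := Rflush_fl hμ'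
  obtain ⟨q, q', h⟩ := h
  have hc : CC _ _ _ _ := ⟨_, _, (f1.rot (wd_mono ν) f2 h).2.2⟩
  exact cover_of_cc hμ hμ' (hc.congr f3 g3)

theorem rflush_order_isomorphism (ν : List Bool) :
    Set.BijOn (Rflush ν) {μ | IsNuPath ν μ} {T | IsNuTree ν T} ∧
    ∀ μ μ', IsNuPath ν μ → IsNuPath ν μ' →
      (TamariLE ν μ μ' ↔ TreeLE ν (Rflush ν μ) (Rflush ν μ')) := by
  refine ⟨⟨fun μ hμ => rflush_isNuTree hμ, fun μ hμ μ' hμ' h => rflush_injOn hμ hμ' h,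
    fun T hT => ?_⟩, fun μ μ' hμ hμ' => ⟨fun h => ?_, fun h => ?_⟩⟩
  · obtain ⟨μ, h1, h2⟩ := rflush_surj hT
    exact ⟨μ, h1, h2⟩
  · have key : ∀ ρ, TamariLE ν μ ρ → TreeLE ν (Rflush ν μ) (Rflush ν ρ) := by
      intro ρ hρ
      induction hρ with
      | refl => exact Relation.ReflTransGen.refl
      | tail _ hab ih =>
        exact Relation.ReflTransGen.tail ih
          ⟨rflush_isNuTree hab.1, rflush_isNuTree hab.2.1, rotation_of_cover hab⟩
    exact key _ h
  · have key : ∀ T, TreeLE ν (Rflush ν μ) T → ∀ ρ, IsNuPath ν ρ → Rflush ν ρ = T →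
        TamariLE ν μ ρ := by
      intro T hT
      induction hT with
      | refl =>
        intro ρ hρ he
        rw [rflush_injOn hρ hμ he]
        exact Relation.ReflTransGen.refl
      | tail _ hbc ih =>
        intro ρ hρ he
        obtain ⟨hA, hB, hrot⟩ := hbc
        obtain ⟨σ, hσ, hσe⟩ := rflush_surj hA
        refine Relation.ReflTransGen.tail (ih σ hσ hσe) (cover_of_rotation hσ hρ ?_)
        rwa [hσe, he]
    exact key _ h μ' hμ' rfl
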